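/- arXiv:1407.4339 — 3 statements merged into one kernel-verified Lean document; each statement's English description precedes it below -/
import Mathlib

section
/- Let G be a multigraph with maximum degree Δ, let k ≥ 1, and take the palette K = {1, …, ⌊(3Δ+k)/2⌋}. If G is properly precoloured so that every vertex is incident with at most k precoloured edges, then the precolouring extends to a proper edge-colouring of all of G using colours from K. -/
variable {V E : Type*}

/-- Edges `e` and `f` of a multigraph (given by its endpoint map `ends`) are adjacent:
they are distinct and share an endpoint. -/
def MAdj (ends : E → Sym2 V) (e f : E) : Prop :=
  e ≠ f ∧ ∃ v : V, v ∈ ends e ∧ v ∈ ends f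

/-- `c` is a proper edge-colouring of the multigraph: adjacent edges get distinct colours. -/
def MProper (ends : E → Sym2 V) (c : E → ℕ) : Prop :=
  ∀ e f : E, MAdj ends e f → c e ≠ c f

/-- The degree of a vertex `v`: the number of edges incident with it. -/
noncomputable def mdeg (ends : E → Sym2 V) (v : V) : ℕ :=
  {e : E | v ∈ ends e}.ncard

/-!
A precoloured set `S` takes at most `d_S(u) + d_S(v)` colours away from the list of an uncoloured
edge `uv`, and what is left is long enough for the Borodin–Kostochka–Woodall theorem on the
uncoloured edges.

That theorem reduces to its bipartite case by a maximum cut. At each vertex at most half of the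
edges fail to cross the cut, so the non-crossing edges can be coloured greedily; an edge `uv` loses
at most `⌊d(u)/2⌋ + ⌊d(v)/2⌋` colours in this way, and enough remain for the bipartite theorem.

In the bipartite case, orient the line graph by a ranking of the edges, upwards at left vertices and
downwards at right vertices. All its subgraphs have kernels (stable matchings), so lists longer than
the out-degrees suffice. To keep the out-degree of `uv` below `max (d(u), d(v))`, suppose the left
side has at least as many vertices of maximum degree as the right one. Some matching then covers
only left vertices of maximum degree, and covers every neighbour of maximum degree of the left
vertices it covers; give it the top rank and continue with the remaining edges.
-/

section

open Finset

variable {A B α : Type*}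

/-! ### Kernels and list colouring -/

/-- `M` is a kernel of the digraph `D` restricted to `F`: no arc of `D` joins two elements of `M`,
and every other element of `F` has an out-neighbour in `M`. -/
structure IsKernel (D : E → E → Prop) (F M : Finset E) : Prop where
  subset : M ⊆ F
  independent : ∀ e ∈ M, ∀ f ∈ M, ¬ D e f
  absorbing : ∀ e ∈ F, e ∉ M → ∃ f ∈ M, D e f

lemma IsKernel.nonempty {D : E → E → Prop} {F M : Finset E} (hM : IsKernel D F M)
    (hF : F.Nonempty) : M.Nonempty := by
  obtain ⟨e, he⟩ := hF
  by_cases heM : e ∈ M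
  · exact ⟨e, heM⟩
  · exact (hM.absorbing e he heM).imp fun _ hf => hf.1

lemma exists_isKernel_of_symm (D : E → E → Prop) [Std.Symm D] [Std.Irrefl D] (F : Finset E) :
    ∃ M, IsKernel D F M := by
  classical
  obtain ⟨M, -, hM⟩ := (F.powerset.filter fun M => ∀ e ∈ M, ∀ f ∈ M, ¬ D e f).exists_le_maximal
    (a := ∅) (by simp)
  obtain ⟨hMF, hindep⟩ : M ⊆ F ∧ ∀ e ∈ M, ∀ f ∈ M, ¬ D e f := by simpa using hM.prop
  refine ⟨M, hMF, hindep, fun e he heM => ?_⟩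
  by_contra! hnone
  refine heM (hM.le_of_ge (y := insert e M) ?_ (subset_insert e M) (mem_insert_self e M))
  simp only [mem_filter, mem_powerset, insert_subset_iff, forall_mem_insert]
  exact ⟨⟨he, hMF⟩, ⟨irrefl e, hnone⟩, fun f hf => ⟨fun h => hnone f hf (symm h), hindep f hf⟩⟩

/-- **Bondy–Boppana–Siegel lemma**. -/
lemma exists_list_coloring_of_isKernel [Nonempty α] {D : E → E → Prop} [DecidableRel D]
    (F : Finset E)
    (hker : ∀ G ⊆ F, ∃ M, IsKernel D G M) (L : E → Finset α)
    (hL : ∀ e ∈ F, #{f ∈ F | D e f} < #(L e)) :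
    ∃ c : E → α, (∀ e ∈ F, c e ∈ L e) ∧ ∀ e ∈ F, ∀ f ∈ F, D e f → c e ≠ c f := by
  classical
  induction F using Finset.strongInduction generalizing L with
  | H F ih =>
  rcases F.eq_empty_or_nonempty with rfl | ⟨e₀, he₀⟩
  · exact ⟨fun _ => Classical.arbitrary α, by simp, by simp⟩
  obtain ⟨a, ha⟩ : (L e₀).Nonempty := card_pos.1 ((Nat.zero_le _).trans_lt (hL e₀ he₀))
  obtain ⟨M, hM⟩ := hker {e ∈ F | a ∈ L e} (filter_subset _ _)
  have hMF : M ⊆ F := hM.subset.trans (filter_subset _ _)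
  have hMne : M.Nonempty := hM.nonempty ⟨e₀, by simp [he₀, ha]⟩
  have hlist : ∀ e ∈ F \ M, #{f ∈ F \ M | D e f} < #((L e).erase a) := by
    intro e he
    obtain ⟨heF, heM⟩ := mem_sdiff.1 he
    have hsub : {f ∈ F \ M | D e f} ⊆ {f ∈ F | D e f} := filter_subset_filter _ sdiff_subset
    by_cases hae : a ∈ L e
    · obtain ⟨f, hfM, hef⟩ := hM.absorbing e (by simp [heF, hae]) heM
      have hlt : #{f ∈ F \ M | D e f} < #{f ∈ F | D e f} :=
        card_lt_card ((ssubset_iff_of_subset hsub).2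
          ⟨f, by simp [hMF hfM, hef], by simp [hfM]⟩)
      have := hL e heF
      rw [card_erase_of_mem hae]
      omega
    · rw [erase_eq_of_notMem hae]
      exact (card_le_card hsub).trans_lt (hL e heF)
  obtain ⟨c, hcL, hcD⟩ := ih (F \ M) (sdiff_ssubset hMF hMne)
    (fun G hG => hker G (hG.trans sdiff_subset)) _ hlist
  refine ⟨M.piecewise (fun _ => a) c, fun e he => ?_, fun e he f hf hef => ?_⟩
  · by_cases heM : e ∈ M
    · simpa [heM] using (mem_filter.1 (hM.subset heM)).2
    · simpa [heM] using mem_of_mem_erase (hcL e (mem_sdiff.2 ⟨he, heM⟩))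
  · have hne : ∀ g ∈ F, g ∉ M → c g ≠ a := fun g hg hgM =>
      ne_of_mem_erase (hcL g (mem_sdiff.2 ⟨hg, hgM⟩))
    by_cases heM : e ∈ M <;> by_cases hfM : f ∈ M <;>
      simp only [heM, hfM, piecewise_eq_of_mem, piecewise_eq_of_notMem, not_false_eq_true]
    · exact absurd hef (hM.independent e heM f hfM)
    · exact (hne f hf hfM).symm
    · exact hne e he heM
    · exact hcD e (mem_sdiff.2 ⟨he, heM⟩) f (mem_sdiff.2 ⟨hf, hfM⟩) hef

/-! ### Galvin orientations of bipartite line graphs -/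

/-- The orientation of the line graph of a bipartite multigraph induced by a ranking `c` of its
edges. The multigraph is encoded by the maps `l` and `r` sending an edge to its end on each side;
arcs go up in rank at left vertices and down in rank at right vertices. -/
def GalvinOrientation (l : E → A) (r : E → B) (c : E → ℤ) (e f : E) : Prop :=
  (l f = l e ∧ c e < c f) ∨ (r f = r e ∧ c f < c e)

/- A kernel is a stable matching when left vertices prefer high and right vertices low rank. An
edge beaten on the right by an edge that is top-ranked on the left can be discarded. -/
lemma exists_isKernel_galvinOrientation (l : E → A) (r : E → B) (c : E → ℤ) (F : Finset E) :
    ∃ M, IsKernel (GalvinOrientation l r c) F M := by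
  classical
  induction F using Finset.strongInduction with
  | H F ih =>
  set T := {e ∈ F | ∀ f ∈ F, l f = l e → c f ≤ c e} with hT
  by_cases hbeaten : ∃ e ∈ T, ∃ f ∈ F, r e = r f ∧ c e < c f
  · obtain ⟨e, heT, f, hf, hr, hc⟩ := hbeaten
    obtain ⟨heF, htop⟩ := mem_filter.1 heT
    have hef : e ≠ f := fun h => hc.ne (congrArg c h)
    obtain ⟨M, hM⟩ := ih (F.erase f) (erase_ssubset hf)
    refine ⟨M, hM.subset.trans (erase_subset f F), hM.independent, fun g hg hgM => ?_⟩
    rcases eq_or_ne g f with rfl | hgf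
    · by_cases heM : e ∈ M
      · exact ⟨e, heM, .inr ⟨hr, hc⟩⟩
      obtain ⟨x, hxM, ⟨hxl, hxc⟩ | ⟨hxr, hxc⟩⟩ :=
        hM.absorbing e (mem_erase.2 ⟨hef, heF⟩) heM
      · exact absurd hxc (htop x (mem_of_mem_erase (hM.subset hxM)) hxl).not_gt
      · exact ⟨x, hxM, .inr ⟨hxr.trans hr, hxc.trans hc⟩⟩
    · exact hM.absorbing g (mem_erase.2 ⟨hgf, hg⟩) hgM
  · push Not at hbeaten
    refine ⟨T, filter_subset _ _, fun e he f hf => ?_, fun e he heT => ?_⟩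
    · rintro (⟨hl, hc⟩ | ⟨hr, hc⟩)
      · exact hc.not_ge ((mem_filter.1 he).2 f (mem_filter.1 hf).1 hl)
      · exact hc.not_ge (hbeaten f hf e (mem_filter.1 he).1 hr)
    · obtain ⟨g, hg, hgl, hgc⟩ : ∃ g ∈ F, l g = l e ∧ c e < c g := by simpa [hT, he] using heT
      obtain ⟨f, hf, hmax⟩ := exists_max_image {f ∈ F | l f = l e} c ⟨g, by simp [hg, hgl]⟩
      obtain ⟨hfF, hfl⟩ := mem_filter.1 hf
      have hfT : f ∈ T := mem_filter.2
        ⟨hfF, fun x hx hxl => hmax x (mem_filter.2 ⟨hx, hxl.trans hfl⟩)⟩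
      exact ⟨f, hfT, .inl ⟨hfl, hgc.trans_le (hmax g (mem_filter.2 ⟨hg, hgl⟩))⟩⟩

open Classical in
/-- The degree of the vertex `a` in a bipartite multigraph with edge set `F`, on the side given by
the end map `l`. -/
noncomputable def fiberDeg (l : E → A) (F : Finset E) (a : A) : ℕ := #{e ∈ F | l e = a}

lemma fiberDeg_mono {l : E → A} {F G : Finset E} (h : F ⊆ G) (a : A) :
    fiberDeg l F a ≤ fiberDeg l G a := by
  classical
  exact card_le_card (filter_subset_filter _ h)

open Classical in
lemma fiberDeg_sdiff_lt {l : E → A} {F M : Finset E} (hMF : M ⊆ F) {a : A} (ha : a ∈ M.image l) :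
    fiberDeg l (F \ M) a < fiberDeg l F a := by
  obtain ⟨m, hm, rfl⟩ := mem_image.1 ha
  exact card_lt_card ((ssubset_iff_of_subset (filter_subset_filter _ sdiff_subset)).2
    ⟨m, by simp [hMF hm], by simp [hm]⟩)

open Classical in
/-- A ranking of the edges of a bipartite multigraph, injective at every vertex, whose Galvin
orientation has out-degree less than the larger end degree at each edge. -/
structure IsGalvinRank (l : E → A) (r : E → B) (F : Finset E) (c : E → ℤ) : Prop where
  injOn_left : Set.InjOn (fun e => (l e, c e)) F
  injOn_right : Set.InjOn (fun e => (r e, c e)) F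
  outDegree_lt : ∀ e ∈ F, #{f ∈ F | GalvinOrientation l r c e f} <
    max (fiberDeg l F (l e)) (fiberDeg r F (r e))

lemma galvinOrientation_neg (l : E → A) (r : E → B) (c : E → ℤ) :
    GalvinOrientation l r (-c) = GalvinOrientation r l c := by
  ext e f
  simp only [GalvinOrientation, Pi.neg_apply, neg_lt_neg_iff, or_comm]

lemma IsGalvinRank.swap {l : E → A} {r : E → B} {F : Finset E} {c : E → ℤ}
    (h : IsGalvinRank r l F c) : IsGalvinRank l r F (-c) where
  injOn_left := by simpa [Set.InjOn] using h.injOn_right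
  injOn_right := by simpa [Set.InjOn] using h.injOn_left
  outDegree_lt e he := by
    rw [galvinOrientation_neg, max_comm]
    exact h.outDegree_lt e he

lemma IsGalvinRank.arc_or_arc {l : E → A} {r : E → B} {F : Finset E} {c : E → ℤ}
    (h : IsGalvinRank l r F c) {e f : E} (he : e ∈ F) (hf : f ∈ F) (hef : e ≠ f)
    (hlr : l e = l f ∨ r e = r f) :
    GalvinOrientation l r c e f ∨ GalvinOrientation l r c f e := by
  rcases lt_trichotomy (c e) (c f) with hc | hc | hc
  · exact hlr.imp (fun hl => .inl ⟨hl.symm, hc⟩) fun hr => .inr ⟨hr, hc⟩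
  · rcases hlr with hl | hr
    · exact absurd (h.injOn_left he hf (Prod.ext hl hc)) hef
    · exact absurd (h.injOn_right he hf (Prod.ext hr hc)) hef
  · exact (hlr.imp (fun hl => .inl ⟨hl, hc⟩) fun hr => .inr ⟨hr.symm, hc⟩).symm

/-! ### Existence of Galvin rankings -/

lemma fiberDeg_le_one {l : E → A} {M : Finset E} (hl : Set.InjOn l M) (a : A) :
    fiberDeg l M a ≤ 1 := by
  classical
  exact card_le_one.2 fun _ hx _ hy => hl
    (mem_filter.1 hx).1 (mem_filter.1 hy).1 ((mem_filter.1 hx).2.trans (mem_filter.1 hy).2.symm)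

open Classical in
lemma fiberDeg_eq_zero {l : E → A} {M : Finset E} {a : A} (ha : a ∉ M.image l) :
    fiberDeg l M a = 0 :=
  card_eq_zero.2 (filter_eq_empty_iff.2 fun e he hea => ha (mem_image.2 ⟨e, he, hea⟩))

section TopRank

variable {l : E → A} {r : E → B} {F M : Finset E} {c : E → ℤ} {b : ℤ} {e : E}

open Classical in
lemma injOn_piecewise_top (hb : ∀ e ∈ F, c e < b) (hl : Set.InjOn l M)
    (hlc : Set.InjOn (fun e => (l e, c e)) ↑(F \ M)) :
    Set.InjOn (fun e => (l e, M.piecewise (fun _ => b) c e)) F := by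
  intro e he f hf hef
  obtain ⟨hlef, hcef⟩ := Prod.ext_iff.1 hef
  by_cases heM : e ∈ M <;> by_cases hfM : f ∈ M <;>
    simp only [heM, hfM, piecewise_eq_of_mem, piecewise_eq_of_notMem, not_false_eq_true] at hcef
  · exact hl heM hfM hlef
  · exact absurd hcef (hb f hf).ne'
  · exact absurd hcef (hb e he).ne
  · exact hlc (mem_sdiff.2 ⟨he, heM⟩) (mem_sdiff.2 ⟨hf, hfM⟩) (Prod.ext hlef hcef)

open Classical in
lemma outDegree_piecewise_top_lt (hb : ∀ e ∈ F, c e < b) (he : e ∈ F) (heM : e ∈ M) :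
    #{f ∈ F | GalvinOrientation l r (M.piecewise (fun _ => b) c) e f} < fiberDeg r F (r e) := by
  have hsub : {f ∈ F | GalvinOrientation l r (M.piecewise (fun _ => b) c) e f} ⊆
      ({f ∈ F | r f = r e} : Finset E).erase e := by
    intro f hf
    obtain ⟨hfF, hef⟩ := mem_filter.1 hf
    have := hb f hfF
    grind [GalvinOrientation, Finset.piecewise]
  exact (card_le_card hsub).trans_lt (card_erase_lt_of_mem (by simp [he]))

open Classical in
lemma outDegree_piecewise_top_le (heb : c e < b) (heM : e ∉ M) :
    #{f ∈ F | GalvinOrientation l r (M.piecewise (fun _ => b) c) e f} ≤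
      #{f ∈ F \ M | GalvinOrientation l r c e f} + fiberDeg l M (l e) := by
  refine (card_le_card fun f hf => ?_).trans (card_union_le _ _)
  obtain ⟨hfF, hef⟩ := mem_filter.1 hf
  grind [GalvinOrientation, Finset.piecewise]

open Classical in
lemma IsGalvinRank.exists_of_sdiff (h : IsGalvinRank l r (F \ M) c) (hl : Set.InjOn l M)
    (hr : Set.InjOn r M)
    (hdrop : ∀ e ∈ F \ M, l e ∈ M.image l →
      max (fiberDeg l (F \ M) (l e)) (fiberDeg r (F \ M) (r e)) <
        max (fiberDeg l F (l e)) (fiberDeg r F (r e))) :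
    ∃ c', IsGalvinRank l r F c' := by
  obtain ⟨b, hb⟩ : ∃ b, ∀ e ∈ F, c e < b := by
    obtain ⟨b, hb⟩ := (F.image c).exists_le
    exact ⟨b + 1, fun e he => Int.lt_add_one_of_le (hb _ (mem_image_of_mem c he))⟩
  refine ⟨M.piecewise (fun _ => b) c, injOn_piecewise_top hb hl h.injOn_left,
    injOn_piecewise_top hb hr h.injOn_right, fun e he => ?_⟩
  by_cases heM : e ∈ M
  · exact (outDegree_piecewise_top_lt hb he heM).trans_le (le_max_right _ _)
  have heFM : e ∈ F \ M := mem_sdiff.2 ⟨he, heM⟩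
  have hnew := outDegree_piecewise_top_le (l := l) (r := r) (F := F) (hb e he) heM
  have hold := h.outDegree_lt e heFM
  by_cases hcov : l e ∈ M.image l
  · have := fiberDeg_le_one hl (l e)
    have := hdrop e heFM hcov
    omega
  · rw [fiberDeg_eq_zero hcov, add_zero] at hnew
    exact (hnew.trans_lt hold).trans_le
      (max_le_max (fiberDeg_mono sdiff_subset _) (fiberDeg_mono sdiff_subset _))

end TopRank

/- A minimal nonempty `X` with `#(X.biUnion t) ≤ #X` satisfies Hall's condition, since all its
proper nonempty subsets violate the inequality. -/
open Classical in
lemma exists_subset_biUnion_eq_empty_or_perfect (t : A → Finset B) {X₀ : Finset A}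
    (hne : X₀.Nonempty) (hcard : #(X₀.biUnion t) ≤ #X₀) :
    ∃ X ⊆ X₀, X.Nonempty ∧ (X.biUnion t = ∅ ∨
      ∃ g : X → B, Function.Injective g ∧ (∀ a : X, g a ∈ t a) ∧ X.biUnion t = univ.image g) := by
  obtain ⟨X, hX, hmin⟩ := exists_minimal_le_of_wellFoundedLT
    (fun X : Finset A => X.Nonempty ∧ #(X.biUnion t) ≤ #X) X₀ ⟨hne, hcard⟩
  obtain ⟨hXne, hXcard⟩ := hmin.prop
  refine ⟨X, hX, hXne, or_iff_not_imp_left.2 fun hempty => ?_⟩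
  have hproper {Z : Finset A} (hZ : Z ⊂ X) (hZne : Z.Nonempty) : #Z < #(Z.biUnion t) :=
    not_le.1 fun h => hmin.not_prop_of_lt hZ ⟨hZne, h⟩
  have hXeq : #X ≤ #(X.biUnion t) := by
    obtain ⟨a, ha⟩ := hXne
    rw [← card_erase_add_one ha]
    rcases (X.erase a).eq_empty_or_nonempty with h | h
    · rw [h, card_empty, zero_add]
      exact card_pos.2 (nonempty_iff_ne_empty.2 hempty)
    · exact (hproper (erase_ssubset ha) h).trans_le
        (card_le_card (biUnion_subset_biUnion_of_subset_left t (erase_subset a X)))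
  have hhall : ∀ s : Finset X, #s ≤ #(s.biUnion fun a => t a) := by
    intro s
    have hs_eq : (s.map (.subtype (· ∈ X))).biUnion t = s.biUnion fun a => t a := by
      simp [map_eq_image, image_biUnion]
    rw [← card_map (.subtype (· ∈ X)), ← hs_eq]
    rcases s.eq_empty_or_nonempty with rfl | hs
    · simp
    · have hsX : s.map (.subtype (· ∈ X)) ⊆ X := fun a ha => property_of_mem_map_subtype s ha
      rcases hsX.eq_or_ssubset with h | h
      · rwa [h]
      · exact (hproper h hs.map).le
  obtain ⟨g, hg, hgt⟩ := (all_card_le_biUnion_card_iff_exists_injective fun a : X => t a).1 hhall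
  refine ⟨g, hg, hgt, (eq_of_subset_of_card_le ?_ ?_).symm⟩
  · exact image_subset_iff.2 fun a _ => mem_biUnion.2 ⟨a, a.2, hgt a⟩
  · rwa [card_image_of_injective _ hg, card_univ, Fintype.card_coe]

open Classical in
lemma exists_matching_of_card_le (l : E → A) (r : E → B) (F : Finset E) {X₀ : Finset A}
    {Y : Finset B} (hX₀ : X₀ ⊆ F.image l) (hne : X₀.Nonempty) (hcard : #Y ≤ #X₀) :
    ∃ M ⊆ F, M.Nonempty ∧ Set.InjOn l M ∧ Set.InjOn r M ∧ M.image l ⊆ X₀ ∧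
      ∀ e ∈ F, l e ∈ M.image l → r e ∈ Y → r e ∈ M.image r := by
  set t : A → Finset B := fun a => ({e ∈ F | l e = a ∧ r e ∈ Y} : Finset E).image r with ht
  have mem_t {e : E} (he : e ∈ F) (hr : r e ∈ Y) : r e ∈ t (l e) :=
    mem_image.2 ⟨e, by simp [he, hr], rfl⟩
  have htY : X₀.biUnion t ⊆ Y := by
    simp only [ht, biUnion_subset_iff_forall_subset, image_subset_iff, mem_filter]
    exact fun _ _ _ h => h.2.2
  obtain ⟨X, hX, ⟨a, ha⟩, hempty | ⟨g, hg, hgt, himage⟩⟩ :=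
    exists_subset_biUnion_eq_empty_or_perfect t hne ((card_le_card htY).trans hcard)
  · obtain ⟨m, hm, rfl⟩ := mem_image.1 (hX₀ (hX ha))
    refine ⟨{m}, by simpa, by simp, by simp, by simp, by simpa using hX ha, fun e he hl hr => ?_⟩
    have hle : l e = l m := by simpa using hl
    have : r e ∈ X.biUnion t := mem_biUnion.2 ⟨l m, ha, hle ▸ mem_t he hr⟩
    simp [hempty] at this
  · have hedge : ∀ a : X, ∃ e ∈ F, l e = a ∧ r e = g a := fun a => by
      obtain ⟨e, he, hre⟩ := mem_image.1 (hgt a)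
      exact ⟨e, (mem_filter.1 he).1, (mem_filter.1 he).2.1, hre⟩
    choose φ hφF hφl hφr using hedge
    have hlφ : (univ.image φ).image l = X := by
      ext; simp [hφl]
    have hrφ : (univ.image φ).image r = X.biUnion t := by
      rw [himage, image_image]
      exact image_congr fun a _ => hφr a
    refine ⟨univ.image φ, by simpa [image_subset_iff] using hφF, ⟨φ ⟨a, ha⟩, by simp⟩, ?_, ?_,
      hlφ.trans_subset hX, fun e he hl hr => ?_⟩
    · have hl_inj : Function.Injective (l ∘ φ) := by
        simpa only [funext hφl, Function.comp_def] using Subtype.val_injective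
      simpa using hl_inj.injOn_range
    · have hr_inj : Function.Injective (r ∘ φ) := by
        simpa only [funext hφr, Function.comp_def] using hg
      simpa using hr_inj.injOn_range
    · rw [hlφ] at hl
      exact hrφ ▸ mem_biUnion.2 ⟨l e, hl, mem_t he hr⟩

open Classical in
/-- The vertices of degree `d`, on the side given by the end map `l`, of a bipartite multigraph
with edge set `F`. -/
noncomputable def degreeClass (l : E → A) (F : Finset E) (d : ℕ) : Finset A :=
  {a ∈ F.image l | fiberDeg l F a = d}

lemma mem_degreeClass {l : E → A} {F : Finset E} {d : ℕ} {e : E} (he : e ∈ F) :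
    l e ∈ degreeClass l F d ↔ fiberDeg l F (l e) = d := by
  simpa [degreeClass] using fun _ => ⟨e, he, rfl⟩

lemma exists_isGalvinRank_of_card_degreeClass_le {l : E → A} {r : E → B} {F : Finset E} {d : ℕ}
    (hd : ∀ e ∈ F, fiberDeg r F (r e) ≤ d) (hne : (degreeClass l F d).Nonempty)
    (hcard : #(degreeClass r F d) ≤ #(degreeClass l F d))
    (ih : ∀ G ⊂ F, ∃ c, IsGalvinRank l r G c) : ∃ c, IsGalvinRank l r F c := by
  classical
  obtain ⟨M, hMF, hMne, hl, hr, hMX, hcov⟩ :=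
    exists_matching_of_card_le l r F (filter_subset _ _) hne hcard
  obtain ⟨c, hc⟩ := ih (F \ M) (sdiff_ssubset hMF hMne)
  refine hc.exists_of_sdiff hl hr fun e he hle => ?_
  have heF : e ∈ F := (mem_sdiff.1 he).1
  have hleft : fiberDeg l F (l e) = d := (mem_degreeClass heF).1 (hMX hle)
  have hright : fiberDeg r (F \ M) (r e) < d := by
    rcases (hd e heF).lt_or_eq with h | h
    · exact (fiberDeg_mono sdiff_subset _).trans_lt h
    · exact (fiberDeg_sdiff_lt hMF (hcov e heF hle ((mem_degreeClass heF).2 h))).trans_eq h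
  exact (max_lt ((fiberDeg_sdiff_lt hMF hle).trans_eq hleft) hright).trans_le
    (hleft.ge.trans (le_max_left _ _))

theorem exists_isGalvinRank (l : E → A) (r : E → B) (F : Finset E) :
    ∃ c, IsGalvinRank l r F c := by
  induction F using Finset.strongInduction with
  | H F ih =>
  rcases F.eq_empty_or_nonempty with rfl | hF
  · exact ⟨0, by simp, by simp, by simp⟩
  obtain ⟨e, he, hmax⟩ :=
    exists_max_image F (fun e => max (fiberDeg l F (l e)) (fiberDeg r F (r e))) hF
  set d := max (fiberDeg l F (l e)) (fiberDeg r F (r e)) with hd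
  have hfull : (degreeClass l F d).Nonempty ∨ (degreeClass r F d).Nonempty :=
    (max_choice (fiberDeg l F (l e)) (fiberDeg r F (r e))).imp
      (fun h => ⟨l e, (mem_degreeClass he).2 (hd.trans h).symm⟩)
      fun h => ⟨r e, (mem_degreeClass he).2 (hd.trans h).symm⟩
  rcases le_total #(degreeClass r F d) #(degreeClass l F d) with h | h
  · refine exists_isGalvinRank_of_card_degreeClass_le
      (fun f hf => (le_max_right _ _).trans (hmax f hf)) ?_ h ih
    exact hfull.elim id fun hr => card_pos.1 ((card_pos.2 hr).trans_le h)
  · obtain ⟨c, hc⟩ := exists_isGalvinRank_of_card_degreeClass_le (l := r) (r := l)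
      (fun f hf => (le_max_left _ _).trans (hmax f hf))
      (hfull.elim (fun hl => card_pos.1 ((card_pos.2 hl).trans_le h)) id) h
      fun G hG => (ih G hG).elim fun c hc => ⟨-c, hc.swap⟩
    exact ⟨-c, hc.swap⟩

/-- The **Borodin–Kostochka–Woodall theorem** for bipartite multigraphs. -/
theorem exists_list_coloring_of_bipartite [Nonempty α] (l : E → A) (r : E → B) (F : Finset E)
    (L : E → Finset α) (hL : ∀ e ∈ F, max (fiberDeg l F (l e)) (fiberDeg r F (r e)) ≤ #(L e)) :
    ∃ c : E → α, (∀ e ∈ F, c e ∈ L e) ∧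
      ∀ e ∈ F, ∀ f ∈ F, e ≠ f → (l e = l f ∨ r e = r f) → c e ≠ c f := by
  classical
  obtain ⟨k, hk⟩ := exists_isGalvinRank l r F
  obtain ⟨c, hcL, hc⟩ := exists_list_coloring_of_isKernel F
    (fun G _ => exists_isKernel_galvinOrientation l r k G) L
    fun e he => (hk.outDegree_lt e he).trans_le (hL e he)
  refine ⟨c, hcL, fun e he f hf hef hlr => ?_⟩
  exact (hk.arc_or_arc he hf hef hlr).elim (hc e he f hf) fun h => (hc f hf e he h).symm

/-! ### Multigraphs -/

instance (ends : E → Sym2 V) : Std.Symm (MAdj ends) :=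
  ⟨fun _ _ h => ⟨h.1.symm, h.2.imp fun _ hv => hv.symm⟩⟩

instance (ends : E → Sym2 V) : Std.Irrefl (MAdj ends) :=
  ⟨fun _ h => h.1 rfl⟩

open Classical in
/-- The degree of the vertex `v` in the multigraph with edge set `F`. -/
noncomputable def degOn (ends : E → Sym2 V) (F : Finset E) (v : V) : ℕ :=
  #{e ∈ F | v ∈ ends e}

/-- `c` is a proper edge-colouring of the multigraph with edge set `F`; its values outside `F` are
irrelevant. -/
def MProperOn (ends : E → Sym2 V) (F : Finset E) (c : E → α) : Prop :=
  ∀ e ∈ F, ∀ f ∈ F, MAdj ends e f → c e ≠ c f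

open Classical in
/-- The colours of the list `L e` that are not used by `c` on an edge of `F` adjacent to `e`. -/
noncomputable def residualList (ends : E → Sym2 V) (F : Finset E) (c : E → α) (L : E → Finset α)
    (e : E) : Finset α :=
  L e \ ({f ∈ F | MAdj ends e f} : Finset E).image c

section

variable {ends : E → Sym2 V} {F G : Finset E} {e : E} {u v : V}

lemma degOn_pos (he : e ∈ F) (hv : v ∈ ends e) : 0 < degOn ends F v :=
  card_pos.2 ⟨e, by simp [he, hv]⟩

open Classical in
lemma degOn_union (h : Disjoint F G) (v : V) :
    degOn ends (F ∪ G) v = degOn ends F v + degOn ends G v := by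
  rw [degOn, filter_union, card_union_of_disjoint (disjoint_filter_filter h), degOn, degOn]

open Classical in
lemma card_filter_mAdj_le (F : Finset E) (he : ends e = s(u, v)) :
    #{f ∈ F | MAdj ends e f} ≤ degOn ends F u + degOn ends F v := by
  refine (card_le_card fun f hf => ?_).trans (card_union_le _ _)
  obtain ⟨hfF, -, w, hwe, hwf⟩ := mem_filter.1 hf
  rw [he, Sym2.mem_iff] at hwe
  rcases hwe with rfl | rfl <;> simp [hfF, hwf]

lemma card_le_card_residualList_add (F : Finset E) (c : E → α) (L : E → Finset α)
    (he : ends e = s(u, v)) :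
    #(L e) ≤ #(residualList ends F c L e) + (degOn ends F u + degOn ends F v) := by
  classical
  exact (Nat.sub_le_iff_le_add.1 (le_card_sdiff _ _)).trans
    (Nat.add_le_add_left (card_image_le.trans (card_filter_mAdj_le F he)) _)

lemma residualList_subset (F : Finset E) (c : E → α) (L : E → Finset α) (e : E) :
    residualList ends F c L e ⊆ L e := by
  classical
  exact sdiff_subset

lemma ne_of_mem_residualList {c : E → α} {L : E → Finset α} {a : α} {f : E}
    (ha : a ∈ residualList ends F c L e) (hf : f ∈ F) (hef : MAdj ends e f) : a ≠ c f := by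
  classical
  exact fun h => (mem_sdiff.1 ha).2 (h ▸ mem_image_of_mem c (mem_filter.2 ⟨hf, hef⟩))

open Classical in
lemma MProperOn.piecewise {c c' : E → α} {L : E → Finset α} (hc : MProperOn ends F c)
    (hc' : MProperOn ends G c') (hres : ∀ e ∈ G, c' e ∈ residualList ends F c L e) :
    MProperOn ends (F ∪ G) (F.piecewise c c') := by
  have hG {e : E} (he : e ∈ F ∪ G) (heF : e ∉ F) : e ∈ G := (mem_union.1 he).resolve_left heF
  intro e he f hf hef
  by_cases heF : e ∈ F <;> by_cases hfF : f ∈ F <;>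
    simp only [heF, hfF, piecewise_eq_of_mem, piecewise_eq_of_notMem, not_false_eq_true]
  · exact hc e heF f hfF hef
  · exact (ne_of_mem_residualList (hres f (hG hf hfF)) heF (symm hef)).symm
  · exact ne_of_mem_residualList (hres e (hG he heF)) hfF hef
  · exact hc' e (hG he heF) f (hG hf hfF) hef

open Classical in
lemma exists_mProperOn_of_card_filter_mAdj_lt [Nonempty α] (L : E → Finset α)
    (hL : ∀ e ∈ F, #{f ∈ F | MAdj ends e f} < #(L e)) :
    ∃ c : E → α, (∀ e ∈ F, c e ∈ L e) ∧ MProperOn ends F c :=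
  exists_list_coloring_of_isKernel F (fun G _ => exists_isKernel_of_symm _ G) L hL

/- Flipping the side of a vertex exchanges its crossing and its non-crossing edges, so a
bipartition with the fewest non-crossing edges works. -/
lemma exists_cut_degOn_le (hloop : ∀ e ∈ F, ¬ (ends e).IsDiag) :
    ∃ σ : V → Bool, ∀ v, degOn ends {e ∈ F | ((ends e).map σ).IsDiag} v ≤
      degOn ends {e ∈ F | ¬ ((ends e).map σ).IsDiag} v := by
  classical
  let inside (σ : V → Bool) : ℕ := #{e ∈ F | ((ends e).map σ).IsDiag}
  refine ⟨Function.argmin inside, fun v => ?_⟩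
  set σ := Function.argmin inside
  have hmin : inside σ ≤ inside (Function.update σ v !σ v) := Function.argmin_le inside _
  have hflip {e : E} (he : e ∈ F) (hv : v ∈ ends e) :
      ((ends e).map (Function.update σ v !σ v)).IsDiag ↔ ¬ ((ends e).map σ).IsDiag := by
    obtain ⟨w, hw⟩ := hv
    have hwv : w ≠ v := by
      rintro rfl
      exact hloop e he (hw ▸ rfl)
    simp only [hw, Sym2.map_mk, Function.update_self, Function.update_of_ne hwv,
      Sym2.mk_isDiag_iff, Bool.not_eq]
  have hkeep {e : E} (hv : v ∉ ends e) :
      (ends e).map (Function.update σ v !σ v) = (ends e).map σ :=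
    Sym2.map_congr fun w hw => Function.update_of_ne (ne_of_mem_of_not_mem hw hv) _ _
  have hsplit (τ : V → Bool) : inside τ = #{e ∈ F | ((ends e).map τ).IsDiag ∧ v ∈ ends e} +
      #{e ∈ F | ((ends e).map τ).IsDiag ∧ v ∉ ends e} := by
    simp only [inside, ← filter_filter, card_filter_add_card_filter_not]
  have hcross : {e ∈ F | ((ends e).map (Function.update σ v !σ v)).IsDiag ∧ v ∈ ends e} =
      {e ∈ F | ¬ ((ends e).map σ).IsDiag ∧ v ∈ ends e} :=
    filter_congr fun e he => and_congr_left fun hv => hflip he hv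
  have haway : {e ∈ F | ((ends e).map (Function.update σ v !σ v)).IsDiag ∧ v ∉ ends e} =
      {e ∈ F | ((ends e).map σ).IsDiag ∧ v ∉ ends e} :=
    filter_congr fun e _ => and_congr_left fun hv => by rw [hkeep hv]
  rw [hsplit, hsplit, hcross, haway] at hmin
  simpa only [degOn, filter_filter] using Nat.le_of_add_le_add_right hmin

lemma exists_mProperOn_of_forall_not_isDiag_map [Nonempty α] (σ : V → Bool)
    (hσ : ∀ e ∈ F, ¬ ((ends e).map σ).IsDiag) (L : E → Finset α)
    (hL : ∀ e ∈ F, ∀ u v, ends e = s(u, v) → max (degOn ends F u) (degOn ends F v) ≤ #(L e)) :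
    ∃ c : E → α, (∀ e ∈ F, c e ∈ L e) ∧ MProperOn ends F c := by
  classical
  have hends : ∀ e, ∃ u v, ends e = s(u, v) ∧ (e ∈ F → σ u = true ∧ σ v = false) := by
    intro e
    induction h : ends e with | _ u v
    by_cases he : e ∈ F
    · have huv : σ u ≠ σ v := by simpa [h] using hσ e he
      cases hu : σ u
      · exact ⟨v, u, Sym2.eq_swap, fun _ => ⟨by simpa [hu] using huv.symm, hu⟩⟩
      · exact ⟨u, v, rfl, fun _ => ⟨hu, by simpa [hu] using huv.symm⟩⟩
    · exact ⟨u, v, rfl, fun h => absurd h he⟩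
  choose l r hlr hside using hends
  have hl (v : V) : fiberDeg l F v ≤ degOn ends F v :=
    card_le_card (monotone_filter_right F fun e _ he => by simp [hlr e, he])
  have hr (v : V) : fiberDeg r F v ≤ degOn ends F v :=
    card_le_card (monotone_filter_right F fun e _ he => by simp [hlr e, he])
  obtain ⟨c, hcL, hc⟩ := exists_list_coloring_of_bipartite l r F L fun e he =>
    (max_le_max (hl _) (hr _)).trans (hL e he _ _ (hlr e))
  refine ⟨c, hcL, fun e he f hf ⟨hne, w, hwe, hwf⟩ => hc e he f hf hne ?_⟩
  obtain ⟨hle, hre⟩ := hside e he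
  obtain ⟨hlf, hrf⟩ := hside f hf
  rw [hlr, Sym2.mem_iff] at hwe hwf
  grind

/-- The **Borodin–Kostochka–Woodall theorem** for multigraphs. -/
theorem exists_mProperOn_of_max_add_min_div_two_le [Nonempty α]
    (hloop : ∀ e ∈ F, ¬ (ends e).IsDiag) (L : E → Finset α)
    (hL : ∀ e ∈ F, ∀ u v, ends e = s(u, v) → max (degOn ends F u) (degOn ends F v) +
      min (degOn ends F u) (degOn ends F v) / 2 ≤ #(L e)) :
    ∃ c : E → α, (∀ e ∈ F, c e ∈ L e) ∧ MProperOn ends F c := by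
  classical
  obtain ⟨σ, hσ⟩ := exists_cut_degOn_le hloop
  set N := {e ∈ F | ((ends e).map σ).IsDiag}
  set H := {e ∈ F | ¬ ((ends e).map σ).IsDiag}
  have hunion : N ∪ H = F := filter_union_filter_not_eq _ F
  have hsum (v : V) : degOn ends N v + degOn ends H v = degOn ends F v :=
    hunion ▸ (degOn_union (disjoint_filter_filter_not F F _) v).symm
  obtain ⟨c, hcL, hc⟩ := exists_mProperOn_of_card_filter_mAdj_lt (F := N) (ends := ends) L <| by
    intro e he
    induction h : ends e with | _ u v
    have heF : e ∈ F := (mem_filter.1 he).1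
    have hpos : 0 < degOn ends F u := degOn_pos heF (by simp [h])
    have := card_filter_mAdj_le N h
    have := hL e heF u v h
    have := hsum u
    have := hsum v
    have := hσ u
    have := hσ v
    omega
  obtain ⟨c', hcL', hc'⟩ := exists_mProperOn_of_forall_not_isDiag_map (F := H) (ends := ends) σ
    (fun e he => (mem_filter.1 he).2) (residualList ends N c L) <| by
    intro e he u v h
    have := card_le_card_residualList_add N c L h
    have := hL e (mem_filter.1 he).1 u v h
    have := hsum u
    have := hsum v
    have := hσ u
    have := hσ v
    omega
  refine ⟨N.piecewise c c', fun e he => ?_, hunion ▸ hc.piecewise hc' hcL'⟩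
  rcases mem_union.1 (hunion ▸ he) with heN | heH
  · simpa [heN] using hcL e heN
  · have heN : e ∉ N := fun h => (mem_filter.1 heH).2 (mem_filter.1 h).2
    simpa [heN] using residualList_subset _ _ _ _ (hcL' e heH)

lemma mdeg_eq_degOn_univ [Fintype E] (ends : E → Sym2 V) (v : V) :
    mdeg ends v = degOn ends univ v := by
  simp [mdeg, degOn, ← Set.ncard_coe_finset]

end

/-! ### Extending a precolouring -/

theorem shannon_extend_predegree_general [Finite E] (ends : E → Sym2 V)
    (hloop : ∀ e, ¬ (ends e).IsDiag) (Δ k : ℕ) (hΔ : ∀ v, mdeg ends v ≤ Δ)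
    (S : Set E) (pre : E → ℕ)
    (hproper : ∀ e ∈ S, ∀ f ∈ S, MAdj ends e f → pre e ≠ pre f)
    (hpredeg : ∀ v : V, {e ∈ S | v ∈ ends e}.ncard ≤ k)
    (L : E → Finset ℕ) (hL : ∀ e ∉ S, (3 * Δ + k) / 2 ≤ #(L e)) :
    ∃ c : E → ℕ, MProper ends c ∧ (∀ e ∉ S, c e ∈ L e) ∧ ∀ e ∈ S, c e = pre e := by
  classical
  have := Fintype.ofFinite E
  lift S to Finset E using S.toFinite
  have hk (v : V) : degOn ends S v ≤ k := by
    simpa [degOn, ← Set.ncard_coe_finset] using hpredeg v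
  have hsum (v : V) : degOn ends S v + degOn ends Sᶜ v ≤ Δ := by
    rw [← degOn_union disjoint_compl_right, union_compl, ← mdeg_eq_degOn_univ]
    exact hΔ v
  obtain ⟨c, hcL, hc⟩ := exists_mProperOn_of_max_add_min_div_two_le (F := Sᶜ)
    (fun e _ => hloop e) (residualList ends S pre L) <| by
    intro e he u v h
    have := card_le_card_residualList_add S pre L h
    have := hL e (by simpa using he)
    have := hsum u
    have := hsum v
    have := hk u
    have := hk v
    omega
  have hext : MProperOn ends (S ∪ Sᶜ) (S.piecewise pre c) :=
    MProperOn.piecewise hproper hc hcL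
  rw [union_compl] at hext
  refine ⟨S.piecewise pre c, fun e f => hext e (mem_univ e) f (mem_univ f), fun e he => ?_,
    fun e he => piecewise_eq_of_mem _ _ _ he⟩
  rw [piecewise_eq_of_notMem _ _ _ he]
  exact residualList_subset _ _ _ _ (hcL e (by simpa using he))

end

/-- Theorem 9 (Shannon-type bound, precoloured degree at most `k`,
palette `⌊(3Δ + k)/2⌋`). -/
theorem shannon_extend_predegree [Fintype E] (ends : E → Sym2 V)
    (hloop : ∀ e, ¬ (ends e).IsDiag)
    (Δ k : ℕ) (hk : 1 ≤ k)
    (hΔ : IsGreatest (Set.range (mdeg ends)) Δ)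
    (S : Set E) (pre : E → ℕ)
    (hpal : ∀ e ∈ S, pre e ∈ Finset.Icc 1 ((3 * Δ + k) / 2))
    (hproper : ∀ e ∈ S, ∀ f ∈ S, MAdj ends e f → pre e ≠ pre f)
    (hpredeg : ∀ v : V, {e ∈ S | v ∈ ends e}.ncard ≤ k) :
    ∃ c : E → ℕ, MProper ends c ∧ (∀ e, c e ∈ Finset.Icc 1 ((3 * Δ + k) / 2)) ∧
      ∀ e ∈ S, c e = pre e := by
  obtain ⟨c, hc, hcL, hcS⟩ := shannon_extend_predegree_general ends hloop Δ k
    (fun v => hΔ.2 ⟨v, rfl⟩) S pre hproper hpredeg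
    (fun _ => Finset.Icc 1 ((3 * Δ + k) / 2)) (by simp)
  exact ⟨c, hc, fun e => (em (e ∈ S)).elim (fun he => hcS e he ▸ hpal e he) (hcL e), hcS⟩
end

section
/- Let G be a connected multigraph and k a non-negative integer with Δ(L(G)) ≤ Δ(G) + k, where L(G) is the line graph. Take the palette K = {1, …, Δ(G)+k}. If G is properly precoloured so that every vertex is incident with at most k precoloured edges, then the precolouring extends to a proper edge-colouring of all of G, unless (a) k = 0 and G is a simple odd cycle, or (b) G is a triangle with edge multiplicities m₁, m₂, m₃ and k = min{m₁, m₂, m₃} − 1. -/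
variable {V E : Type*}

/-- The degree of an edge `e` in the line graph: the number of edges adjacent to it. -/
noncomputable def lineDeg (ends : E → Sym2 V) (e : E) : ℕ :=
  {f : E | MAdj ends e f}.ncard

/-- The multiplicity of the vertex pair `{a, b}`. -/
noncomputable def mult (ends : E → Sym2 V) (a b : V) : ℕ :=
  {e : E | ends e = s(a, b)}.ncard

/-- The multigraph is a simple odd cycle. -/
def IsSimpleOddCycle (ends : E → Sym2 V) : Prop :=
  ∃ n : ℕ, Odd n ∧ 3 ≤ n ∧ ∃ (ve : V ≃ ZMod n) (ee : E ≃ ZMod n),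
    ∀ i : ZMod n, ends (ee.symm i) = s(ve.symm i, ve.symm (i + 1))

/-- The multigraph is a triangle on three vertices `u, v, w` with edge multiplicities
`m₁, m₂, m₃ ≥ 1` and `k = min{m₁, m₂, m₃} - 1`. -/
def IsExceptionalTriangle (ends : E → Sym2 V) (k : ℕ) : Prop :=
  ∃ u v w : V, u ≠ v ∧ u ≠ w ∧ v ≠ w ∧ (∀ x : V, x = u ∨ x = v ∨ x = w) ∧
    1 ≤ mult ends u v ∧ 1 ≤ mult ends u w ∧ 1 ≤ mult ends v w ∧
    k + 1 = min (mult ends u v) (min (mult ends u w) (mult ends v w))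

/-!
Call an edge critical if it is left uncoloured by some proper partial colouring that extends the
precolouring and leaves as few edges uncoloured as possible. A critical edge has exactly `Δ(G) + k`
neighbours in the line graph, showing every colour once, so the uncoloured place can be moved to any
neighbour that is not precoloured. By counting degrees, a critical edge `xy` has at `x` more free
edges than there are edges joining `x` and `y`; so a walk along critical edges never has to stop or
turn back, and some cycle consists of critical edges.

Erasing the colours of this cycle leaves at least two colours for each of its edges, but no
colouring from these lists. Hence its length is odd and all the lists agree: every edge of the cycle
sees the same colours outside the cycle, each of them once. If the length is at least `4`, the
uncoloured place could otherwise be sent through a free edge off the cycle, so there is no such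
edge at the cycle, hence none of its edges has a parallel one, and a parity argument excludes all
further edges: `G` is the cycle and `k = 0`. If the length is `3`, every edge that meets the cycle
joins two of its vertices, and counting degrees gives the exceptional triangle.
-/

section Cycles

theorem zmod_natCast_ne_zero_of_lt {n a : ℕ} (ha : 0 < a) (han : a < n) : (a : ZMod n) ≠ 0 :=
  mt (ZMod.natCast_eq_zero_iff a n).1 (Nat.not_dvd_of_pos_of_lt ha han)

variable {α : Type*} {n : ℕ}

theorem exists_path_listColoring {L : ℕ → Set α} (hL : ∀ i, (L i).Nontrivial) {a : α}
    (ha : a ∈ L 0) : ∃ d : ℕ → α, d 0 = a ∧ ∀ i, d i ∈ L i ∧ d (i + 1) ≠ d i := by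
  choose next hmem hne using fun i b => (hL i).exists_ne b
  refine ⟨Nat.rec a fun i b => next (i + 1) b, rfl, fun i => ⟨?_, hne _ _⟩⟩
  cases i with
  | zero => exact ha
  | succ i => exact hmem _ _

-- Start at `i` with a colour that `i + 1` lacks and colour greedily backwards around the cycle.
theorem exists_cycle_listColoring_of_not_subset [NeZero n] {L : ZMod n → Set α}
    (hL : ∀ i, (L i).Nontrivial) {i : ZMod n} (hi : ¬ L i ⊆ L (i + 1)) :
    ∃ d : ZMod n → α, ∀ j, d j ∈ L j ∧ d j ≠ d (j + 1) := by
  obtain ⟨a, ha, ha'⟩ := Set.not_subset.1 hi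
  obtain ⟨d, hd0, hd⟩ := exists_path_listColoring (L := fun t => L (i - (t : ZMod n)))
    (fun _ => hL _) (by simpa using ha)
  have hmem (j : ZMod n) : d (i - j).val ∈ L j := by simpa using (hd (i - j).val).1
  refine ⟨fun j => d (i - j).val, fun j => ⟨hmem j, ?_⟩⟩
  cases hm : (i - j).val with
  | zero =>
    obtain rfl : i = j := sub_eq_zero.1 ((ZMod.val_eq_zero _).1 hm)
    have hdi : d (i - i).val = a := by simpa using hd0
    intro (h : d (i - i).val = d (i - (i + 1)).val)
    exact ha' (hdi ▸ h ▸ hmem (i + 1))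
  | succ m =>
    have hmn : m + 1 < n := hm ▸ (i - j).val_lt
    have hpred : i - (j + 1) = (m : ZMod n) := by
      have := (i - j).natCast_zmod_val
      rw [hm, Nat.cast_succ] at this
      linear_combination -this
    simpa only [hm, hpred, ZMod.val_natCast_of_lt (Nat.lt_of_succ_lt hmn)] using (hd m).2

theorem exists_cycle_twoColoring_of_even (hn : Even n) {a b : α} (hab : a ≠ b) :
    ∃ d : ZMod n → α, ∀ j, (d j = a ∨ d j = b) ∧ d j ≠ d (j + 1) := by
  let parity : ZMod n →+* ZMod 2 := ZMod.castHom hn.two_dvd (ZMod 2)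
  refine ⟨fun j => if parity j = 0 then a else b, fun j => ⟨ite_eq_or_eq _ _ _, ?_⟩⟩
  have hsucc : ∀ x : ZMod 2, x + 1 = 0 ↔ x ≠ 0 := by decide
  by_cases hj : parity j = 0 <;> simp [hsucc, hj, hab, hab.symm]

theorem odd_and_eq_of_not_cycle_listColoring [NeZero n] {L : ZMod n → Set α}
    (hL : ∀ i, (L i).Nontrivial) (h : ¬ ∃ d : ZMod n → α, ∀ j, d j ∈ L j ∧ d j ≠ d (j + 1)) :
    Odd n ∧ ∀ i j, L i = L j := by
  have hsucc (i : ZMod n) : L i ⊆ L (i + 1) := by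
    by_contra hi
    exact h (exists_cycle_listColoring_of_not_subset hL hi)
  have hadd (i : ZMod n) (t : ℕ) : L i ⊆ L (i + t) := by
    induction t with
    | zero => simp
    | succ t ih => simpa [add_assoc] using ih.trans (hsucc _)
  have hsub (i j : ZMod n) : L i ⊆ L j := by simpa using hadd i (j - i).val
  refine ⟨Nat.not_even_iff_odd.1 fun hn => h ?_, fun i j => (hsub i j).antisymm (hsub j i)⟩
  obtain ⟨a, ha, b, hb, hab⟩ := hL 0
  obtain ⟨d, hd⟩ := exists_cycle_twoColoring_of_even hn hab
  refine ⟨d, fun j => ⟨hsub 0 j ?_, (hd j).2⟩⟩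
  rcases (hd j).1 with h | h <;> rwa [h]

theorem exists_iff_succ_of_odd (hn : Odd n) (T : ZMod n → Prop) : ∃ i, T i ↔ T (i + 1) := by
  by_contra! h
  have halt (i : ZMod n) : T (i + 1) ↔ ¬ T i := by grind
  obtain ⟨m, rfl⟩ := hn
  have htwo (t : ℕ) : T (2 * t) ↔ T 0 := by
    induction t with
    | zero => simp
    | succ t ih =>
      rw [show (2 * (t + 1 : ℕ) : ZMod (2 * m + 1)) = 2 * t + 1 + 1 by push_cast; ring, halt, halt,
        not_not, ih]
  have hzero : (2 * m + 1 : ZMod (2 * m + 1)) = 0 := by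
    exact_mod_cast ZMod.natCast_self (2 * m + 1)
  have := halt (2 * m)
  rw [hzero, htwo] at this
  tauto

theorem not_isAcyclic_of_forall_adj_exists_ne [Finite V] {G : SimpleGraph V} (hG : G ≠ ⊥)
    (h : ∀ u v, G.Adj u v → ∃ w ≠ v, G.Adj u w) : ¬ G.IsAcyclic := by
  intro hacyc
  have hpath (m : ℕ) : ∃ u v, ∃ q : G.Walk u v, q.IsPath ∧ q.length = m + 1 := by
    induction m with
    | zero =>
      obtain ⟨u, v, huv⟩ := SimpleGraph.ne_bot_iff_exists_adj.1 hG
      exact ⟨u, v, huv.toWalk, SimpleGraph.Walk.IsPath.of_adj huv, rfl⟩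
    | succ m ih =>
      obtain ⟨u, v, q, hq, hlen⟩ := ih
      have hnil : ¬ q.Nil := fun hnil => by simp [hnil.length_eq_zero] at hlen
      obtain ⟨w, hw, huw⟩ := h u q.snd (q.adj_snd hnil)
      have hwq : w ∉ q.support := fun hmem => hw (hacyc.eq_snd_of_adj_start hq huw hmem)
      exact ⟨w, v, q.cons huw.symm, hq.cons hwq, by simp [hlen]⟩
  have := Fintype.ofFinite V
  obtain ⟨u, v, q, hq, hlen⟩ := hpath (Fintype.card V)
  have := hq.length_lt
  omega

theorem exists_zmod_cycle_of_not_isAcyclic {G : SimpleGraph V} (hG : ¬ G.IsAcyclic) :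
    ∃ n, 3 ≤ n ∧ ∃ v : ZMod n → V, Function.Injective v ∧ ∀ i, G.Adj (v i) (v (i + 1)) := by
  rw [SimpleGraph.isAcyclic_iff_free_cycleGraph] at hG
  push Not at hG
  obtain ⟨n, hn, ⟨φ⟩⟩ := hG
  obtain ⟨m, rfl⟩ : ∃ m, n = m + 2 := ⟨n - 2, by omega⟩
  refine ⟨m + 2, hn, φ, φ.injective, fun i => φ.toHom.map_adj ?_⟩
  exact SimpleGraph.cycleGraph_adj.2 (Or.inr (add_sub_cancel_left i 1))

end Cycles

section PartialColorings

variable {X α : Type*} {H : SimpleGraph X} {p c : X → Option α} {x y : X}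

/-- `c` is a proper partial colouring of the vertices of `H`, with `none` for uncoloured vertices,
that extends the partial colouring `p`. -/
structure IsPartialExtension (H : SimpleGraph X) (p c : X → Option α) : Prop where
  proper : ∀ ⦃x y⦄, H.Adj x y → ∀ ⦃a⦄, c x = some a → c y ≠ some a
  agree : ∀ ⦃x a⦄, p x = some a → c x = some a

/-- `c` leaves as few vertices uncoloured as an extension of `p` can, and `x` is one of them. -/
structure IsStuckAt (H : SimpleGraph X) (p c : X → Option α) (x : X) : Prop
    extends IsPartialExtension H p c where
  minimal : ∀ c', IsPartialExtension H p c' → {y | c y = none}.ncard ≤ {y | c' y = none}.ncard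
  uncolored : c x = none

/-- The vertex `x` is left uncoloured by some extension of `p` with fewest uncoloured vertices. -/
def IsCritical (H : SimpleGraph X) (p : X → Option α) (x : X) : Prop :=
  ∃ c, IsStuckAt H p c x

/-- The colours that `x` may receive once the colours of the vertices of `T` are erased. -/
def availableColors (H : SimpleGraph X) (c : X → Option α) (T : Set X) (x : X) : Set α :=
  {a | ∀ y ∉ T, H.Adj x y → c y ≠ some a}

theorem notMem_availableColors {T : Set X} {a : α} :
    a ∉ availableColors H c T x ↔ ∃ y ∉ T, H.Adj x y ∧ c y = some a := by
  simp [availableColors]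

theorem exists_coloring_or_isCritical [Finite X] (hp : IsPartialExtension H p p) :
    (∃ C : H.Coloring α, ∀ x a, p x = some a → C x = a) ∨ ∃ x, IsCritical H p x := by
  obtain ⟨c, hc, hmin⟩ := exists_minimalFor_of_wellFoundedLT (IsPartialExtension H p)
    (fun c => {y | c y = none}.ncard) ⟨p, hp⟩
  by_cases h : ∃ x, c x = none
  · obtain ⟨x, hx⟩ := h
    exact .inr ⟨x, c, { hc with
      minimal := fun c' hc' => (le_total _ _).elim id (hmin hc')
      uncolored := hx }⟩
  · push Not at h
    choose C hC using fun x => Option.ne_none_iff_exists'.1 (h x)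
    refine .inl ⟨.mk C fun {x y} hxy heq => hc.proper hxy (hC x) (heq ▸ hC y), fun x a hx => ?_⟩
    exact Option.some.inj ((hC x).symm.trans (hc.agree hx))

theorem availableColors_nontrivial [Finite X] [Finite α] {T : Set X}
    (hdeg : (H.neighborSet x).ncard ≤ Nat.card α) {y z : X} (hyz : y ≠ z) (hy : y ∈ T)
    (hz : z ∈ T) (hxy : H.Adj x y) (hxz : H.Adj x z) : (availableColors H c T x).Nontrivial := by
  have hpair : {y, z} ⊆ H.neighborSet x := Set.pair_subset hxy hxz
  have hsub : some '' (availableColors H c T x)ᶜ ⊆ c '' (H.neighborSet x \ {y, z}) := by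
    rintro _ ⟨a, ha, rfl⟩
    obtain ⟨w, hwT, hxw, hw⟩ := notMem_availableColors.1 ha
    exact ⟨w, ⟨hxw, by rintro (rfl | rfl) <;> contradiction⟩, hw⟩
  have hle := (Set.ncard_le_ncard hsub).trans (Set.ncard_image_le (Set.toFinite _))
  rw [Set.ncard_image_of_injective _ (Option.some_injective α),
    Set.ncard_sdiff hpair, Set.ncard_pair hyz] at hle
  have htwo : 2 ≤ (H.neighborSet x).ncard := Set.ncard_pair hyz ▸ Set.ncard_le_ncard hpair
  have hcompl := Set.ncard_add_ncard_compl (availableColors H c T x)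
  rw [← Set.one_lt_ncard_iff_nontrivial]
  omega

namespace IsStuckAt

theorem precolor_eq_none (h : IsStuckAt H p c x) : p x = none :=
  Option.eq_none_iff_forall_ne_some.2 fun _ hx => by simpa [h.uncolored] using h.agree hx

theorem notMem_range_of_recolor [Finite X] (h : IsStuckAt H p c x) {ι : Type*} {s : ι → X}
    (hs : Function.Injective s) (hfree : ∀ i, p (s i) = none) {d : ι → α}
    (hproper : ∀ i j, H.Adj (s i) (s j) → d i ≠ d j)
    (havail : ∀ i, d i ∈ availableColors H c (Set.range s) (s i)) : x ∉ Set.range s := by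
  rintro ⟨i₀, rfl⟩
  let c' := Function.extend s (some ∘ d) c
  have hin (i : ι) : c' (s i) = some (d i) := hs.extend_apply _ _ i
  have hout {y : X} (hy : y ∉ Set.range s) : c' y = c y := Function.extend_apply' _ _ _ hy
  have hc' : IsPartialExtension H p c' := by
    refine ⟨fun y z hyz a hya hza => ?_, fun y a hy => ?_⟩
    · by_cases hy : y ∈ Set.range s <;> by_cases hz : z ∈ Set.range s
      · obtain ⟨⟨i, rfl⟩, ⟨j, rfl⟩⟩ := And.intro hy hz
        rw [hin, Option.some_inj] at hya hza
        exact hproper i j hyz (hya.trans hza.symm)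
      · obtain ⟨i, rfl⟩ := hy
        exact havail i z hz hyz (by rw [← hout hz, hza, ← hya, hin])
      · obtain ⟨i, rfl⟩ := hz
        exact havail i y hy hyz.symm (by rw [← hout hy, hya, ← hza, hin])
      · rw [hout hy] at hya
        rw [hout hz] at hza
        exact h.proper hyz hya hza
    · rw [hout, h.agree hy]
      rintro ⟨i, rfl⟩
      simp [hfree] at hy
  refine (h.minimal c' hc').not_gt (Set.ncard_lt_ncard ⟨fun y hy => ?_, fun hsub => ?_⟩)
  · by_cases hys : y ∈ Set.range s
    · obtain ⟨i, rfl⟩ := hys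
      simp [hin] at hy
    · exact (hout hys).symm.trans hy
  · simpa [hin] using hsub h.uncolored

theorem exists_adj_eq_some [Finite X] (h : IsStuckAt H p c x) (a : α) :
    ∃ y, H.Adj x y ∧ c y = some a := by
  by_contra! hno
  exact h.notMem_range_of_recolor (s := fun _ : Unit => x) (d := fun _ => a)
    (Function.injective_of_subsingleton _) (fun _ => h.precolor_eq_none)
    (fun _ _ hadj => (H.loopless.irrefl _ hadj).elim) (fun _ y _ => hno y) ⟨(), rfl⟩

theorem bijOn_neighborSet [Finite X] [Finite α] (h : IsStuckAt H p c x)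
    (hdeg : (H.neighborSet x).ncard ≤ Nat.card α) :
    Set.BijOn c (H.neighborSet x) (Set.range some) := by
  have hsub : Set.range some ⊆ c '' H.neighborSet x := by
    rintro _ ⟨a, rfl⟩
    exact h.exists_adj_eq_some a
  have hcard : (Set.range (some : α → Option α)).ncard = Nat.card α :=
    Set.ncard_range_of_injective (Option.some_injective α)
  have hle : (c '' H.neighborSet x).ncard ≤ (H.neighborSet x).ncard :=
    Set.ncard_image_le (Set.toFinite _)
  have heq : Set.range some = c '' H.neighborSet x :=
    Set.eq_of_subset_of_ncard_le hsub (by omega)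
  rw [heq]
  refine Set.InjOn.bijOn_image (Set.injOn_of_ncard_image_eq ?_ (Set.toFinite _))
  rw [← heq] at hle ⊢
  omega

theorem ncard_neighborSet [Finite X] [Finite α] (h : IsStuckAt H p c x)
    (hdeg : (H.neighborSet x).ncard ≤ Nat.card α) : (H.neighborSet x).ncard = Nat.card α :=
  (h.bijOn_neighborSet hdeg).ncard_eq.trans
    (Set.ncard_range_of_injective (Option.some_injective α))

theorem exists_eq_some [Finite X] [Finite α] (h : IsStuckAt H p c x)
    (hdeg : (H.neighborSet x).ncard ≤ Nat.card α) (hxy : H.Adj x y) : ∃ a, c y = some a := by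
  obtain ⟨a, ha⟩ := (h.bijOn_neighborSet hdeg).mapsTo hxy
  exact ⟨a, ha.symm⟩

theorem swap [Finite X] [Finite α] [DecidableEq X] (h : IsStuckAt H p c x)
    (hdeg : (H.neighborSet x).ncard ≤ Nat.card α) (hxy : H.Adj x y) (hy : p y = none) :
    IsStuckAt H p (c ∘ Equiv.swap x y) y := by
  have hyx : c (Equiv.swap x y y) = none := by rw [Equiv.swap_apply_right, h.uncolored]
  have hends {u v : X} {a : α} (huv : H.Adj u v) (hu : c (Equiv.swap x y u) = some a)
      (hv : c (Equiv.swap x y v) = some a) : u ≠ x := by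
    rintro rfl
    have hvy : v ≠ y := by grind
    rw [Equiv.swap_apply_left] at hu
    rw [Equiv.swap_apply_of_ne_of_ne huv.ne' hvy] at hv
    exact hvy ((h.bijOn_neighborSet hdeg).injOn huv hxy (hv.trans hu.symm))
  refine ⟨⟨fun u v huv a hu hv => ?_, fun z a hz => ?_⟩, fun c' hc' => ?_, hyx⟩
  · refine h.proper huv (a := a) ?_ ?_
    · rwa [Function.comp_apply, Equiv.swap_apply_of_ne_of_ne (hends huv hu hv) (by grind)] at hu
    · rwa [Function.comp_apply, Equiv.swap_apply_of_ne_of_ne (hends huv.symm hv hu) (by grind)]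
        at hv
  · have hzx : z ≠ x := by grind [h.precolor_eq_none]
    have hzy : z ≠ y := by grind
    rw [Function.comp_apply, Equiv.swap_apply_of_ne_of_ne hzx hzy, h.agree hz]
  · have himage : {z | (c ∘ Equiv.swap x y) z = none} = Equiv.swap x y '' {z | c z = none} := by
      rw [Equiv.image_eq_preimage_symm, Equiv.symm_swap]
      rfl
    rw [himage, Set.ncard_image_of_injective _ (Equiv.injective _)]
    exact h.minimal c' hc'

end IsStuckAt

theorem IsCritical.of_adj [Finite X] [Finite α] (h : IsCritical H p x)
    (hdeg : (H.neighborSet x).ncard ≤ Nat.card α) (hxy : H.Adj x y) (hy : p y = none) :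
    IsCritical H p y := by
  classical
  obtain ⟨c, hc⟩ := h
  exact ⟨_, hc.swap hdeg hxy hy⟩

theorem IsCritical.precolor_eq_none (h : IsCritical H p x) : p x = none := by
  obtain ⟨c, hc⟩ := h
  exact hc.precolor_eq_none

end PartialColorings

section InducedCycles

/-- The cycle on `ZMod n`, where `i` is joined to `i + 1`. For `n ≥ 3`, an embedding of it into `H`
is an induced cycle of `H`. -/
abbrev zmodCycle (n : ℕ) : SimpleGraph (ZMod n) :=
  SimpleGraph.circulantGraph {1}

theorem zmodCycle_adj {n : ℕ} {i j : ZMod n} :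
    (zmodCycle n).Adj i j ↔ i ≠ j ∧ (j = i + 1 ∨ i = j + 1) := by
  simp only [SimpleGraph.circulantGraph_adj, Set.mem_singleton_iff, sub_eq_iff_eq_add']
  tauto

theorem zmod_one_ne_zero {n : ℕ} (hn : 1 < n) : (1 : ZMod n) ≠ 0 := by
  exact_mod_cast zmod_natCast_ne_zero_of_lt one_pos hn

theorem zmod_two_ne_zero {n : ℕ} (hn : 2 < n) : (2 : ZMod n) ≠ 0 := by
  exact_mod_cast zmod_natCast_ne_zero_of_lt two_pos hn

variable {X α : Type*} {H : SimpleGraph X} {p c : X → Option α} {y z : X} {n : ℕ}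
  {s : zmodCycle n ↪g H} {i j r : ZMod n} {a : α}

theorem zmodCycle_embedding_adj (hn : 1 < n) (s : zmodCycle n ↪g H) (i : ZMod n) :
    H.Adj (s i) (s (i + 1)) :=
  s.map_adj_iff.2 (zmodCycle_adj.2 ⟨by simpa using zmod_one_ne_zero hn, .inl rfl⟩)

namespace IsStuckAt

variable [Finite X] [Finite α] [NeZero n]

theorem odd_and_availableColors_eq (h : IsStuckAt H p c (s r))
    (hdeg : ∀ x, (H.neighborSet x).ncard ≤ Nat.card α) (hn : 3 ≤ n) (hs : ∀ i, p (s i) = none) :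
    Odd n ∧ ∀ i j, availableColors H c (Set.range s) (s i) =
      availableColors H c (Set.range s) (s j) := by
  refine odd_and_eq_of_not_cycle_listColoring (fun i => ?_) ?_
  · have hne : i - 1 ≠ i + 1 := fun heq => zmod_two_ne_zero hn (by linear_combination -heq)
    have hadj := zmodCycle_embedding_adj (Nat.lt_of_succ_lt hn) s
    have hpred : H.Adj (s i) (s (i - 1)) := by simpa using (hadj (i - 1)).symm
    exact availableColors_nontrivial (hdeg _) (s.injective.ne hne) ⟨_, rfl⟩ ⟨_, rfl⟩ hpred (hadj i)
  · rintro ⟨d, hd⟩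
    refine h.notMem_range_of_recolor s.injective hs (d := d) (fun i j hij => ?_)
      (fun i => (hd i).1) ⟨r, rfl⟩
    rcases (zmodCycle_adj.1 (s.map_adj_iff.1 hij)).2 with rfl | rfl
    · exact (hd i).2
    · exact (hd j).2.symm

theorem exists_adj_of_adj_outside (h : IsStuckAt H p c (s r))
    (hdeg : ∀ x, (H.neighborSet x).ncard ≤ Nat.card α) (hn : 3 ≤ n) (hs : ∀ i, p (s i) = none)
    (hy : y ∉ Set.range s) (hiy : H.Adj (s i) y) (hya : c y = some a) (j : ZMod n) :
    ∃ z ∉ Set.range s, H.Adj (s j) z ∧ c z = some a := by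
  rw [← notMem_availableColors, (h.odd_and_availableColors_eq hdeg hn hs).2 j i,
    notMem_availableColors]
  exact ⟨y, hy, hiy, hya⟩

theorem apply_ne_of_adj_outside (h : IsStuckAt H p c (s r))
    (hdeg : ∀ x, (H.neighborSet x).ncard ≤ Nat.card α) (hn : 3 ≤ n) (hs : ∀ i, p (s i) = none)
    (hy : y ∉ Set.range s) (hiy : H.Adj (s i) y) (hya : c y = some a) (j : ZMod n) :
    c (s j) ≠ some a := by
  obtain ⟨z, -, hjz, hz⟩ := h.exists_adj_of_adj_outside hdeg hn hs hy hiy hya j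
  exact h.proper hjz.symm hz

theorem exists_isStuckAt (h : IsStuckAt H p c (s r))
    (hdeg : ∀ x, (H.neighborSet x).ncard ≤ Nat.card α) (hn : 3 ≤ n) (hs : ∀ i, p (s i) = none)
    (j : ZMod n) : ∃ c', IsStuckAt H p c' (s j) ∧ ∀ y ∉ Set.range s, c' y = c y := by
  classical
  have hadj := zmodCycle_embedding_adj (Nat.lt_of_succ_lt hn) s
  have hadd (t : ℕ) : ∃ c', IsStuckAt H p c' (s (r + t)) ∧ ∀ y ∉ Set.range s, c' y = c y := by
    induction t with
    | zero => exact ⟨c, by simpa using h, fun _ _ => rfl⟩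
    | succ t ih =>
      obtain ⟨c', hc', heq⟩ := ih
      rw [Nat.cast_succ, ← add_assoc]
      refine ⟨_, hc'.swap (hdeg _) (hadj _) (hs _), fun y hy => ?_⟩
      rw [Function.comp_apply, Equiv.swap_apply_of_ne_of_ne, heq y hy] <;>
        exact fun h => hy ⟨_, h.symm⟩
  simpa using hadd (j - r).val

theorem eq_of_adj_outside (h : IsStuckAt H p c (s r))
    (hdeg : ∀ x, (H.neighborSet x).ncard ≤ Nat.card α) (hn : 3 ≤ n) (hs : ∀ i, p (s i) = none)
    (hy : y ∉ Set.range s) (hz : z ∉ Set.range s) (hjy : H.Adj (s j) y) (hjz : H.Adj (s j) z)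
    (hyz : c y = c z) : y = z := by
  obtain ⟨c', hc', heq⟩ := h.exists_isStuckAt hdeg hn hs j
  exact (hc'.bijOn_neighborSet (hdeg _)).injOn hjy hjz (by rw [heq y hy, heq z hz, hyz])

theorem exists_eq_some_of_adj_outside (h : IsStuckAt H p c (s r))
    (hdeg : ∀ x, (H.neighborSet x).ncard ≤ Nat.card α) (hn : 3 ≤ n) (hs : ∀ i, p (s i) = none)
    (hy : y ∉ Set.range s) (hjy : H.Adj (s j) y) : ∃ a, c y = some a := by
  obtain ⟨c', hc', heq⟩ := h.exists_isStuckAt hdeg hn hs j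
  exact heq y hy ▸ hc'.exists_eq_some (hdeg _) hjy

-- After the uncoloured place moves to `s (i - 1)`, the colour of `s (i + 1)` must be seen there,
-- and not from outside the cycle.
theorem apply_sub_two_eq (h : IsStuckAt H p c (s i))
    (hdeg : ∀ x, (H.neighborSet x).ncard ≤ Nat.card α) (hn : 3 ≤ n) (hs : ∀ i, p (s i) = none) :
    c (s (i - 2)) = c (s (i + 1)) := by
  classical
  have hadj := zmodCycle_embedding_adj (Nat.lt_of_succ_lt hn) s
  have htwo := zmod_two_ne_zero hn
  have hprev : H.Adj (s i) (s (i - 1)) := by simpa using (hadj (i - 1)).symm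
  obtain ⟨b, hb⟩ := h.exists_eq_some (hdeg _) (hadj i)
  obtain ⟨y, hy, hyb⟩ := (h.swap (hdeg _) hprev (hs _)).exists_adj_eq_some b
  have hysi : y ≠ s i := by
    rintro rfl
    rw [Function.comp_apply, Equiv.swap_apply_left] at hyb
    have := s.injective ((h.bijOn_neighborSet (hdeg _)).injOn hprev (hadj i)
      (hyb.trans hb.symm))
    exact htwo (by linear_combination -this)
  rw [Function.comp_apply, Equiv.swap_apply_of_ne_of_ne hysi hy.ne'] at hyb
  obtain ⟨m, rfl⟩ : y ∈ Set.range s := by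
    by_contra hout
    exact h.apply_ne_of_adj_outside hdeg hn hs hout hy hyb (i + 1) hb
  rcases (zmodCycle_adj.1 (s.map_adj_iff.1 hy)).2 with rfl | hm
  · exact (hysi (by rw [sub_add_cancel])).elim
  · rw [hb, ← hyb, show i - 2 = m by linear_combination hm]

theorem not_adj_succ_of_adj_outside (h : IsStuckAt H p c (s i))
    (hdeg : ∀ x, (H.neighborSet x).ncard ≤ Nat.card α) (hn : 4 ≤ n) (hs : ∀ i, p (s i) = none)
    (hy : y ∉ Set.range s) (hpy : p y = none) (hiy : H.Adj (s i) y) :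
    ¬ H.Adj y (s (i + 1)) := by
  classical
  intro hyi
  have hn' : 3 ≤ n := by omega
  have hadj := zmodCycle_embedding_adj (Nat.lt_of_succ_lt hn') s
  have htwo := zmod_two_ne_zero hn'
  have hthree : (3 : ZMod n) ≠ 0 := by exact_mod_cast zmod_natCast_ne_zero_of_lt three_pos hn
  have hys (j : ZMod n) : s j ≠ y := fun h => hy ⟨j, h⟩
  obtain ⟨b, hb⟩ := h.exists_eq_some (hdeg _) (hadj i)
  have hmoved := (h.swap (hdeg _) hiy hpy).swap (hdeg _) hyi (hs _)
  refine hmoved.apply_ne_of_adj_outside hdeg hn' hs hy hiy (a := b) ?_ (i - 2) ?_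
  · rw [Function.comp_apply, Equiv.swap_apply_left, Function.comp_apply,
      Equiv.swap_apply_of_ne_of_ne (hadj i).ne' (hys _), hb]
  · rw [Function.comp_apply, Equiv.swap_apply_of_ne_of_ne (hys _) (s.injective.ne ?_),
      Function.comp_apply, Equiv.swap_apply_of_ne_of_ne (s.injective.ne ?_) (hys _),
      h.apply_sub_two_eq hdeg hn' hs, hb]
    · exact fun heq => htwo (by linear_combination -heq)
    · exact fun heq => hthree (by linear_combination -heq)

end IsStuckAt

end InducedCycles

section Multigraphs

variable {ends : E → Sym2 V} {v w : V} {e : E}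

/-- The line graph of a multigraph. -/
def lineGraph (ends : E → Sym2 V) : SimpleGraph E where
  Adj := MAdj ends
  symm := ⟨fun _ _ ⟨hne, x, hx⟩ => ⟨hne.symm, x, hx.symm⟩⟩
  loopless := ⟨fun _ h => h.1 rfl⟩

theorem mult_symm (ends : E → Sym2 V) (a b : V) : mult ends a b = mult ends b a := by
  simp only [mult, Sym2.eq_swap]

theorem one_le_mult [Finite E] (he : ends e = s(v, w)) : 1 ≤ mult ends v w :=
  (Set.ncard_pos (Set.toFinite _)).2 ⟨e, he⟩

theorem mdeg_add_mdeg [Finite E] (hvw : v ≠ w) (he : ends e = s(v, w)) :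
    mdeg ends v + mdeg ends w = lineDeg ends e + 1 + mult ends v w := by
  have hunion : {f | v ∈ ends f} ∪ {f | w ∈ ends f} = insert e {f | MAdj ends e f} := by
    ext f
    by_cases hf : f = e <;> simp [MAdj, he, hf, eq_comm (a := e)]
  have hinter : {f | v ∈ ends f} ∩ {f | w ∈ ends f} = {f | ends f = s(v, w)} := by
    ext f
    exact Sym2.mem_and_mem_iff hvw
  rw [mdeg, mdeg, ← Set.ncard_union_add_ncard_inter, hunion, hinter,
    Set.ncard_insert_of_notMem (fun h => h.1 rfl), lineDeg, mult]

theorem mdeg_eq_mult_add_mult [Finite E] (hloop : ∀ e, ¬ (ends e).IsDiag) {a b c : V}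
    (hbc : b ≠ c) (hV : ∀ x, x = a ∨ x = b ∨ x = c) :
    mdeg ends a = mult ends a b + mult ends a c := by
  have hdisj : Disjoint {f | ends f = s(a, b)} {f | ends f = s(a, c)} :=
    Set.disjoint_left.2 fun f hb hc => hbc (Sym2.congr_right.1 (hb.symm.trans hc))
  rw [mult, mult, ← Set.ncard_union_eq hdisj, mdeg]
  congr 1
  ext f
  refine ⟨fun ⟨x, hx⟩ => ?_, ?_⟩
  · rcases hV x with rfl | rfl | rfl
    · exact (hloop f (by simp [hx])).elim
    · exact .inl hx
    · exact .inr hx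
  · rintro (hf | hf) <;> exact ⟨_, hf⟩

theorem range_eq_univ_of_edge_closed
    (hconn : ∀ a b : V, Relation.ReflTransGen (fun x y => ∃ e, ends e = s(x, y)) a b)
    {U : Set V} (hU : U.Nonempty) (hclosed : ∀ e, ∀ x ∈ U, x ∈ ends e → ∀ y ∈ ends e, y ∈ U) :
    U = Set.univ := by
  obtain ⟨u, hu⟩ := hU
  refine Set.eq_univ_of_forall fun x => ?_
  induction hconn u x with
  | refl => exact hu
  | tail _ hstep ih =>
    obtain ⟨e, he⟩ := hstep
    exact hclosed e _ ih (by simp [he]) _ (by simp [he])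

theorem isExceptionalTriangle_of_mdeg_add_mdeg [Finite E] (hloop : ∀ e, ¬ (ends e).IsDiag)
    {a b c : V} (hab : a ≠ b) (hac : a ≠ c) (hbc : b ≠ c) (hV : ∀ x, x = a ∨ x = b ∨ x = c)
    (hmab : 1 ≤ mult ends a b) (hmbc : 1 ≤ mult ends b c) (hmca : 1 ≤ mult ends c a) {D k : ℕ}
    (hD : IsGreatest (Set.range (mdeg ends)) D)
    (hsum : mdeg ends a + mdeg ends b = D + k + 1 + mult ends a b) :
    IsExceptionalTriangle ends k := by
  have ha := mdeg_eq_mult_add_mult hloop hbc hV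
  have hb := mdeg_eq_mult_add_mult hloop hac (a := b) fun x => by have := hV x; tauto
  have hc := mdeg_eq_mult_add_mult hloop hab (a := c) fun x => by have := hV x; tauto
  have hle (x : V) : mdeg ends x ≤ D := hD.2 ⟨x, rfl⟩
  have hmax : D = mdeg ends a ∨ D = mdeg ends b ∨ D = mdeg ends c := by
    obtain ⟨x, rfl⟩ := hD.1
    rcases hV x with rfl | rfl | rfl <;> simp
  rw [mult_symm] at hmca
  rw [mult_symm ends b a] at hb
  rw [mult_symm ends c a, mult_symm ends c b] at hc
  refine ⟨a, b, c, hab, hac, hbc, hV, hmab, hmca, hmbc, ?_⟩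
  have := hle a
  have := hle b
  have := hle c
  omega

end Multigraphs

section MultigraphCycles

variable {n : ℕ} {ends : E → Sym2 V} {v : ZMod n → V} {f : ZMod n → E} {i j : ZMod n} {q : E}

/-- A cycle of length `n ≥ 3` of the multigraph: `v i` are its vertices in cyclic order, and `f i`
is its edge joining `v i` to `v (i + 1)`. -/
structure IsCycle (ends : E → Sym2 V) (v : ZMod n → V) (f : ZMod n → E) : Prop where
  three_le : 3 ≤ n
  injective : Function.Injective v
  ends_eq : ∀ i, ends (f i) = s(v i, v (i + 1))

namespace IsCycle

theorem ne_succ (h : IsCycle ends v f) (i : ZMod n) : v i ≠ v (i + 1) :=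
  h.injective.ne (by simpa using zmod_one_ne_zero (Nat.lt_of_succ_lt h.three_le))

theorem mem_ends_iff (h : IsCycle ends v f) : v j ∈ ends (f i) ↔ j = i ∨ j = i + 1 := by
  rw [h.ends_eq, Sym2.mem_iff, h.injective.eq_iff, h.injective.eq_iff]

theorem edge_injective (h : IsCycle ends v f) : Function.Injective f := by
  intro i j hij
  have hi : i = j ∨ i = j + 1 := h.mem_ends_iff.1 (hij ▸ h.mem_ends_iff.2 (.inl rfl))
  have hj : j = i ∨ j = i + 1 := h.mem_ends_iff.1 (hij ▸ h.mem_ends_iff.2 (.inl rfl))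
  have htwo := zmod_two_ne_zero h.three_le
  grind

/-- The edges of a cycle of the multigraph, as an induced cycle of the line graph. -/
def toEmbedding (h : IsCycle ends v f) : zmodCycle n ↪g lineGraph ends where
  toFun := f
  inj' := h.edge_injective
  map_rel_iff' {i j} := by
    rw [zmodCycle_adj, ← h.edge_injective.ne_iff]
    refine and_congr_right fun hij => ⟨?_, ?_⟩
    · rintro ⟨x, hxi : x ∈ ends (f i), hxj : x ∈ ends (f j)⟩
      have hne : i ≠ j := ne_of_apply_ne f hij
      rw [h.ends_eq, Sym2.mem_iff] at hxi
      rcases hxi with rfl | rfl <;> grind [h.mem_ends_iff.1 hxj]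
    · rintro (rfl | rfl)
      · exact ⟨_, h.mem_ends_iff.2 (.inr rfl), h.mem_ends_iff.2 (.inl rfl)⟩
      · exact ⟨_, h.mem_ends_iff.2 (.inl rfl), h.mem_ends_iff.2 (.inr rfl)⟩

theorem adj_iff_of_notMem_range (h : IsCycle ends v f) (hq : q ∉ Set.range f) :
    (lineGraph ends).Adj (f i) q ↔ v i ∈ ends q ∨ v (i + 1) ∈ ends q := by
  change (f i ≠ q ∧ ∃ x, x ∈ ends (f i) ∧ x ∈ ends q) ↔ _
  simp only [h.ends_eq, Sym2.mem_iff, exists_eq_left, or_and_right, exists_or]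
  exact and_iff_right fun hfq => hq ⟨i, hfq⟩

theorem ncard_le_two (h : IsCycle ends v f) {A : Set E} (hA : A ⊆ Set.range f)
    (hi : ∀ g ∈ A, v i ∈ ends g) : A.ncard ≤ 2 := by
  have hsub : A ⊆ {f i, f (i - 1)} := by
    intro g hg
    obtain ⟨j, rfl⟩ := hA hg
    rcases h.mem_ends_iff.1 (hi _ hg) with rfl | rfl <;> simp
  exact (Set.ncard_le_ncard hsub).trans (by simpa using Set.ncard_insert_le (f i) {f (i - 1)})

theorem range_eq_univ (h : IsCycle ends v f)
    (hconn : ∀ a b : V, Relation.ReflTransGen (fun x y => ∃ e, ends e = s(x, y)) a b)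
    (hclosed : ∀ q ∉ Set.range f, ∀ j, v j ∈ ends q → ∃ i, ends q = s(v i, v (i + 1))) :
    Set.range v = Set.univ := by
  refine range_eq_univ_of_edge_closed hconn ⟨_, 0, rfl⟩ ?_
  rintro q _ ⟨j, rfl⟩ hj y hy
  obtain ⟨i, hi⟩ : ∃ i, ends q = s(v i, v (i + 1)) := by
    by_cases hq : q ∈ Set.range f
    · obtain ⟨i, rfl⟩ := hq
      exact ⟨i, h.ends_eq i⟩
    · exact hclosed q hq j hj
  rw [hi, Sym2.mem_iff] at hy
  rcases hy with rfl | rfl <;> exact Set.mem_range_self _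

theorem isSimpleOddCycle (h : IsCycle ends v f) (hn : Odd n) (hv : Set.range v = Set.univ)
    (hf : Set.range f = Set.univ) : IsSimpleOddCycle ends := by
  let ve := Equiv.ofBijective v ⟨h.injective, Set.range_eq_univ.1 hv⟩
  let fe := Equiv.ofBijective f ⟨h.edge_injective, Set.range_eq_univ.1 hf⟩
  exact ⟨n, hn, h.three_le, ve.symm, fe.symm, h.ends_eq⟩

end IsCycle

end MultigraphCycles

section Precolorings

variable {α : Type*} {ends : E → Sym2 V} {p : E → Option α} {D k : ℕ} {e : E}

/-- The numerical conditions on a loopless multigraph of maximum degree `D` and a partial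
edge-colouring `p` of it from the palette `α`. -/
structure DegreeConditions (ends : E → Sym2 V) (p : E → Option α) (D k : ℕ) : Prop where
  not_isDiag : ∀ e, ¬ (ends e).IsDiag
  isGreatest_mdeg : IsGreatest (Set.range (mdeg ends)) D
  card_palette : Nat.card α = D + k
  lineDeg_le : ∀ e, lineDeg ends e ≤ D + k
  ncard_precolored_le : ∀ x, {e | p e ≠ none ∧ x ∈ ends e}.ncard ≤ k

namespace DegreeConditions

theorem mdeg_le (h : DegreeConditions ends p D k) (x : V) : mdeg ends x ≤ D :=
  h.isGreatest_mdeg.2 ⟨x, rfl⟩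

theorem ncard_neighborSet_le (h : DegreeConditions ends p D k) (e : E) :
    ((lineGraph ends).neighborSet e).ncard ≤ Nat.card α :=
  (h.lineDeg_le e).trans_eq h.card_palette.symm

theorem ne_of_ends_eq (h : DegreeConditions ends p D k) {x y : V} (he : ends e = s(x, y)) :
    x ≠ y := by
  rintro rfl
  exact h.not_isDiag e (by simp [he])

variable [Finite E] [Finite α]

theorem mdeg_add_mdeg_of_isCritical (h : DegreeConditions ends p D k)
    (hcrit : IsCritical (lineGraph ends) p e) {x y : V} (he : ends e = s(x, y)) :
    mdeg ends x + mdeg ends y = D + k + 1 + mult ends x y := by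
  obtain ⟨c, hc⟩ := hcrit
  have hline : lineDeg ends e = D + k :=
    (hc.ncard_neighborSet (h.ncard_neighborSet_le e)).trans h.card_palette
  rw [mdeg_add_mdeg (h.ne_of_ends_eq he) he, hline]

theorem lt_ncard_free_of_isCritical (h : DegreeConditions ends p D k)
    (hcrit : IsCritical (lineGraph ends) p e) {x y : V} (he : ends e = s(x, y)) :
    mult ends x y < {g | p g = none ∧ x ∈ ends g}.ncard := by
  have hsum := h.mdeg_add_mdeg_of_isCritical hcrit he
  have hy := h.mdeg_le y
  have hpre := h.ncard_precolored_le x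
  have hsplit : {g | x ∈ ends g} =
      {g | p g ≠ none ∧ x ∈ ends g} ∪ {g | p g = none ∧ x ∈ ends g} := by
    ext g
    by_cases hg : p g = none <;> simp [hg]
  have hle : mdeg ends x ≤ _ := (congrArg Set.ncard hsplit).trans_le (Set.ncard_union_le _ _)
  omega

theorem exists_isCritical_adj (h : DegreeConditions ends p D k)
    (hcrit : IsCritical (lineGraph ends) p e) {x y : V} (he : ends e = s(x, y)) :
    ∃ z ≠ y, ∃ g, ends g = s(x, z) ∧ IsCritical (lineGraph ends) p g := by
  obtain ⟨g, ⟨hpg, hxg⟩, hg⟩ :=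
    Set.exists_mem_notMem_of_ncard_lt_ncard (h.lt_ncard_free_of_isCritical hcrit he)
  obtain ⟨z, hz⟩ := hxg
  have hzy : z ≠ y := by
    rintro rfl
    exact hg hz
  have hadj : (lineGraph ends).Adj e g :=
    ⟨by rintro rfl; exact hg he, x, by simp [he], by simp [hz]⟩
  exact ⟨z, hzy, g, hz, hcrit.of_adj (h.ncard_neighborSet_le e) hadj hpg⟩

end DegreeConditions

end Precolorings

section CriticalCycles

variable {α : Type*} {ends : E → Sym2 V} {p c : E → Option α} {D k n : ℕ}
  {v : ZMod n → V} {f : ZMod n → E} {i j r : ZMod n} {q q' : E} {a : α}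

/-- A cycle of the multigraph all of whose edges are critical for the partial colouring `p`. -/
structure IsCriticalCycle (ends : E → Sym2 V) (p : E → Option α) (v : ZMod n → V) (f : ZMod n → E) :
    Prop extends IsCycle ends v f where
  critical : ∀ i, IsCritical (lineGraph ends) p (f i)

theorem DegreeConditions.exists_isCriticalCycle [Finite V] [Finite E] [Finite α]
    {e : E} (h : DegreeConditions ends p D k)
    (hcrit : IsCritical (lineGraph ends) p e) :
    ∃ (n : ℕ) (v : ZMod n → V) (f : ZMod n → E), IsCriticalCycle ends p v f := by
  let G := SimpleGraph.fromEdgeSet (ends '' {g | IsCritical (lineGraph ends) p g})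
  have hadj {x y : V} (g : E) (hg : IsCritical (lineGraph ends) p g) (hxy : ends g = s(x, y)) :
      G.Adj x y := ⟨⟨g, hg, hxy⟩, h.ne_of_ends_eq hxy⟩
  have hbot : G ≠ ⊥ := by
    induction he : ends e with
    | h x y => exact SimpleGraph.ne_bot_iff_exists_adj.2 ⟨x, y, hadj e hcrit he⟩
  have hcyc : ¬ G.IsAcyclic := by
    refine not_isAcyclic_of_forall_adj_exists_ne hbot ?_
    rintro x y ⟨⟨g, hg, hxy⟩, -⟩
    obtain ⟨z, hzy, g', hg', hcrit'⟩ := h.exists_isCritical_adj hg hxy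
    exact ⟨z, hzy, hadj g' hcrit' hg'⟩
  obtain ⟨n, hn, v, hv, hvadj⟩ := exists_zmod_cycle_of_not_isAcyclic hcyc
  choose f hf hends using fun i => (hvadj i).1
  exact ⟨n, v, f, ⟨hn, hv, hends⟩, hf⟩

namespace IsCriticalCycle

theorem neZero (h : IsCriticalCycle ends p v f) : NeZero n :=
  ⟨by have := h.three_le; omega⟩

theorem free (h : IsCriticalCycle ends p v f) (i : ZMod n) : p (f i) = none :=
  (h.critical i).precolor_eq_none

variable [Finite E] [Finite α]

theorem odd (h : IsCriticalCycle ends p v f) (hdeg : DegreeConditions ends p D k) : Odd n := by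
  have := h.neZero
  obtain ⟨c, hc⟩ := h.critical 0
  exact (hc.odd_and_availableColors_eq (s := h.toEmbedding) hdeg.ncard_neighborSet_le h.three_le
    h.free).1

theorem exists_eq_some_of_mem_ends (h : IsCriticalCycle ends p v f)
    (hdeg : DegreeConditions ends p D k) (hc : IsStuckAt (lineGraph ends) p c (f r))
    (hq : q ∉ Set.range f) (hj : v j ∈ ends q) : ∃ a, c q = some a := by
  have := h.neZero
  exact hc.exists_eq_some_of_adj_outside (s := h.toEmbedding) hdeg.ncard_neighborSet_le h.three_le
    h.free hq ((h.adj_iff_of_notMem_range hq).2 (.inl hj))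

theorem exists_color_at_edge (h : IsCriticalCycle ends p v f)
    (hdeg : DegreeConditions ends p D k) (hc : IsStuckAt (lineGraph ends) p c (f r))
    (hq : q ∉ Set.range f) (hj : v j ∈ ends q) (hqa : c q = some a) (i : ZMod n) :
    ∃ q' ∉ Set.range f, c q' = some a ∧ (v i ∈ ends q' ∨ v (i + 1) ∈ ends q') := by
  have := h.neZero
  obtain ⟨q', hq', hadj, hqa'⟩ := hc.exists_adj_of_adj_outside (s := h.toEmbedding)
    hdeg.ncard_neighborSet_le h.three_le h.free hq ((h.adj_iff_of_notMem_range hq).2 (.inl hj)) hqa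
    i
  exact ⟨q', hq', hqa', (h.adj_iff_of_notMem_range hq').1 hadj⟩

theorem eq_of_color_eq (h : IsCriticalCycle ends p v f)
    (hdeg : DegreeConditions ends p D k) (hc : IsStuckAt (lineGraph ends) p c (f r))
    (hq : q ∉ Set.range f) (hq' : q' ∉ Set.range f) (hi : v i ∈ ends q)
    (hi' : v (i + 1) ∈ ends q') (hcolor : c q = c q') : q = q' := by
  have := h.neZero
  exact hc.eq_of_adj_outside (s := h.toEmbedding) (j := i) hdeg.ncard_neighborSet_le h.three_le
    h.free hq hq' ((h.adj_iff_of_notMem_range hq).2 (.inl hi))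
    ((h.adj_iff_of_notMem_range hq').2 (.inr hi')) hcolor

-- `n` is odd and every edge of the cycle sees the colour of `q` at one of its ends, so some edge
-- sees it at both.
theorem exists_parallel_of_notMem_range (h : IsCriticalCycle ends p v f)
    (hdeg : DegreeConditions ends p D k) (hq : q ∉ Set.range f) (hj : v j ∈ ends q) :
    ∃ i, ∃ q' ∉ Set.range f, ends q' = s(v i, v (i + 1)) := by
  obtain ⟨c, hc⟩ := h.critical 0
  obtain ⟨a, ha⟩ := h.exists_eq_some_of_mem_ends hdeg hc hq hj
  let T (i : ZMod n) : Prop := ∃ q' ∉ Set.range f, c q' = some a ∧ v i ∈ ends q'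
  have hT (i : ZMod n) : T i ∨ T (i + 1) := by
    obtain ⟨q', hq', ha', hi | hi⟩ := h.exists_color_at_edge hdeg hc hq hj ha i
    exacts [.inl ⟨q', hq', ha', hi⟩, .inr ⟨q', hq', ha', hi⟩]
  obtain ⟨i, hi⟩ := exists_iff_succ_of_odd (h.odd hdeg) T
  obtain ⟨⟨q₁, hq₁, ha₁, hi₁⟩, q₂, hq₂, ha₂, hi₂⟩ : T i ∧ T (i + 1) :=
    (hT i).elim (fun h => ⟨h, hi.1 h⟩) fun h => ⟨hi.2 h, h⟩
  obtain rfl := h.eq_of_color_eq hdeg hc hq₁ hq₂ hi₁ hi₂ (ha₁.trans ha₂.symm)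
  exact ⟨i, q₁, hq₁, (Sym2.mem_and_mem_iff (h.ne_succ i)).1 ⟨hi₁, hi₂⟩⟩

theorem mem_range_of_free (h : IsCriticalCycle ends p v f) (hdeg : DegreeConditions ends p D k)
    (hn : 4 ≤ n) (hq : p q = none) (hj : v j ∈ ends q) : q ∈ Set.range f := by
  have := h.neZero
  by_contra hout
  obtain ⟨c, hc⟩ := h.critical (j - 1)
  refine hc.not_adj_succ_of_adj_outside (s := h.toEmbedding) hdeg.ncard_neighborSet_le hn h.free
    hout hq ((h.adj_iff_of_notMem_range hout).2 (.inr ?_))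
    ((h.adj_iff_of_notMem_range hout).2 (.inl ?_)).symm <;> simpa

theorem mult_le_one (h : IsCriticalCycle ends p v f) (hdeg : DegreeConditions ends p D k)
    (hn : 4 ≤ n) (i : ZMod n) : mult ends (v i) (v (i + 1)) ≤ 1 := by
  have hle : {g | p g = none ∧ v i ∈ ends g}.ncard ≤ 2 :=
    h.ncard_le_two (fun _ hg => h.mem_range_of_free hdeg hn hg.1 hg.2) fun _ hg => hg.2
  have := hdeg.lt_ncard_free_of_isCritical (h.critical i) (h.ends_eq i)
  omega

theorem mem_range_of_mem_ends (h : IsCriticalCycle ends p v f)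
    (hdeg : DegreeConditions ends p D k) (hn : 4 ≤ n) (hj : v j ∈ ends q) : q ∈ Set.range f := by
  by_contra hq
  obtain ⟨i, q', hq', hends⟩ := h.exists_parallel_of_notMem_range hdeg hq hj
  exact hq' ⟨i, (Set.ncard_le_one_iff (Set.toFinite _)).1 (h.mult_le_one hdeg hn i)
    (h.ends_eq i) hends⟩

theorem eq_zero_and_isSimpleOddCycle (h : IsCriticalCycle ends p v f)
    (hdeg : DegreeConditions ends p D k) (hn : 4 ≤ n)
    (hconn : ∀ a b : V, Relation.ReflTransGen (fun x y => ∃ e, ends e = s(x, y)) a b) :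
    k = 0 ∧ IsSimpleOddCycle ends := by
  have hv : Set.range v = Set.univ := h.range_eq_univ hconn fun q hq j hj =>
    (hq (h.mem_range_of_mem_ends hdeg hn hj)).elim
  have hf : Set.range f = Set.univ := Set.eq_univ_of_forall fun q => by
    obtain ⟨j, hj⟩ := Set.range_eq_univ.1 hv (ends q).out.1
    exact h.mem_range_of_mem_ends hdeg hn (hj ▸ Sym2.out_fst_mem _)
  refine ⟨?_, h.isSimpleOddCycle (h.odd hdeg) hv hf⟩
  have htwo : mdeg ends (v 0) ≤ 2 := h.ncard_le_two (hf ▸ Set.subset_univ _) fun _ hg => hg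
  have hsum := hdeg.mdeg_add_mdeg_of_isCritical (h.critical 0) (h.ends_eq 0)
  have hle := hdeg.mdeg_le (v (0 + 1))
  have hmult := one_le_mult (h.ends_eq 0)
  omega

theorem exists_ends_eq_of_triangle {v : ZMod 3 → V} {f : ZMod 3 → E} {j : ZMod 3}
    (h : IsCriticalCycle ends p v f) (hdeg : DegreeConditions ends p D k)
    (hq : q ∉ Set.range f) (hj : v j ∈ ends q) : ∃ i, ends q = s(v i, v (i + 1)) := by
  obtain ⟨c, hc⟩ := h.critical 0
  obtain ⟨a, ha⟩ := h.exists_eq_some_of_mem_ends hdeg hc hq hj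
  obtain ⟨q', hq', ha', hnext | hprev⟩ := h.exists_color_at_edge hdeg hc hq hj ha (j + 1)
  · obtain rfl := h.eq_of_color_eq hdeg hc hq hq' hj hnext (ha.trans ha'.symm)
    exact ⟨j, (Sym2.mem_and_mem_iff (h.ne_succ j)).1 ⟨hj, hnext⟩⟩
  · have hthree : ∀ j : ZMod 3, j + 1 + 1 + 1 = j := by decide
    rw [← hthree j] at hj
    obtain rfl := h.eq_of_color_eq hdeg hc hq' hq hprev hj (ha'.trans ha.symm)
    exact ⟨j + 1 + 1, (Sym2.mem_and_mem_iff (h.ne_succ _)).1 ⟨hprev, hj⟩⟩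

theorem isExceptionalTriangle {v : ZMod 3 → V} {f : ZMod 3 → E}
    (h : IsCriticalCycle ends p v f) (hdeg : DegreeConditions ends p D k)
    (hconn : ∀ a b : V, Relation.ReflTransGen (fun x y => ∃ e, ends e = s(x, y)) a b) :
    IsExceptionalTriangle ends k := by
  have hv : Set.range v = Set.univ :=
    h.range_eq_univ hconn fun q hq j hj => h.exists_ends_eq_of_triangle hdeg hq hj
  have hV (x : V) : x = v 0 ∨ x = v 1 ∨ x = v 2 := by
    obtain ⟨i, rfl⟩ := Set.range_eq_univ.1 hv x
    have hi : ∀ i : ZMod 3, i = 0 ∨ i = 1 ∨ i = 2 := by decide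
    rcases hi i with rfl | rfl | rfl <;> simp
  exact isExceptionalTriangle_of_mdeg_add_mdeg hdeg.not_isDiag (h.ne_succ 0) (h.ne_succ 2).symm
    (h.ne_succ 1) hV (one_le_mult (h.ends_eq 0)) (one_le_mult (h.ends_eq 1))
    (one_le_mult (h.ends_eq 2)) hdeg.isGreatest_mdeg
    (hdeg.mdeg_add_mdeg_of_isCritical (h.critical 0) (h.ends_eq 0))

end IsCriticalCycle

end CriticalCycles

section Extension

theorem DegreeConditions.isSimpleOddCycle_or_isExceptionalTriangle {α : Type*} [Finite V]
    [Finite E] [Finite α] {ends : E → Sym2 V} {p : E → Option α} {D k : ℕ} {e : E}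
    (h : DegreeConditions ends p D k)
    (hconn : ∀ a b : V, Relation.ReflTransGen (fun x y => ∃ e, ends e = s(x, y)) a b)
    (hcrit : IsCritical (lineGraph ends) p e) :
    (k = 0 ∧ IsSimpleOddCycle ends) ∨ IsExceptionalTriangle ends k := by
  obtain ⟨n, v, f, hcycle⟩ := h.exists_isCriticalCycle hcrit
  rcases hcycle.three_le.eq_or_lt with rfl | hn
  · exact .inr (hcycle.isExceptionalTriangle h hconn)
  · exact .inl (hcycle.eq_zero_and_isSimpleOddCycle h hn hconn)

open Classical in
/-- The precolouring `pre` of the edges in `S`, as a partial colouring from the palette `P`. -/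
noncomputable def partialColoring {P : Finset ℕ} (S : Set E) (pre : E → ℕ)
    (hpal : ∀ e ∈ S, pre e ∈ P) : E → Option P :=
  fun e => if h : e ∈ S then some ⟨pre e, hpal e h⟩ else none

variable {P : Finset ℕ} {S : Set E} {pre : E → ℕ} {hpal : ∀ e ∈ S, pre e ∈ P}

theorem partialColoring_eq_some {e : E} {a : P} :
    partialColoring S pre hpal e = some a ↔ e ∈ S ∧ pre e = a := by
  simp [partialColoring, Subtype.ext_iff]

theorem partialColoring_ne_none {e : E} : partialColoring S pre hpal e ≠ none ↔ e ∈ S := by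
  simp [partialColoring]

theorem isPartialExtension_partialColoring {ends : E → Sym2 V}
    (hproper : ∀ e ∈ S, ∀ f ∈ S, MAdj ends e f → pre e ≠ pre f) :
    IsPartialExtension (lineGraph ends) (partialColoring S pre hpal)
      (partialColoring S pre hpal) where
  proper e f hef a he hf := by
    rw [partialColoring_eq_some] at he hf
    exact hproper e he.1 f hf.1 hef (he.2.trans hf.2.symm)
  agree _ _ := id

theorem degreeConditions_partialColoring [Fintype V] [Fintype E] [Nonempty V] {ends : E → Sym2 V}
    {k : ℕ} (hloop : ∀ e, ¬ (ends e).IsDiag)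
    (hk : Finset.univ.sup (lineDeg ends) ≤ Finset.univ.sup (mdeg ends) + k)
    (hP : P.card = Finset.univ.sup (mdeg ends) + k)
    (hpredeg : ∀ v : V, {e ∈ S | v ∈ ends e}.ncard ≤ k) :
    DegreeConditions ends (partialColoring S pre hpal) (Finset.univ.sup (mdeg ends)) k where
  not_isDiag := hloop
  isGreatest_mdeg := by
    obtain ⟨x, -, hx⟩ := Finset.exists_mem_eq_sup _ Finset.univ_nonempty (mdeg ends)
    refine ⟨⟨x, hx.symm⟩, ?_⟩
    rintro _ ⟨y, rfl⟩
    exact Finset.le_sup (Finset.mem_univ y)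
  card_palette := by simpa using hP
  lineDeg_le e := (Finset.le_sup (Finset.mem_univ e)).trans hk
  ncard_precolored_le := by simpa only [partialColoring_ne_none] using hpredeg

end Extension

/-- Theorem 7: precolouring extension for connected multigraphs with
`Δ(L(G)) ≤ Δ(G) + k`, palette `{1, …, Δ(G) + k}` and precoloured degree of every
vertex at most `k`, with the two exceptional cases. -/
theorem gallai_extend [Fintype V] [Fintype E] (ends : E → Sym2 V)
    (hloop : ∀ e, ¬ (ends e).IsDiag)
    (hVne : Nonempty V)
    (hconn : ∀ a b : V, Relation.ReflTransGen (fun x y => ∃ e, ends e = s(x, y)) a b)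
    (k : ℕ)
    (hk : Finset.univ.sup (lineDeg ends) ≤ Finset.univ.sup (mdeg ends) + k)
    (S : Set E) (pre : E → ℕ)
    (hpal : ∀ e ∈ S, pre e ∈ Finset.Icc 1 (Finset.univ.sup (mdeg ends) + k))
    (hproper : ∀ e ∈ S, ∀ f ∈ S, MAdj ends e f → pre e ≠ pre f)
    (hpredeg : ∀ v : V, {e ∈ S | v ∈ ends e}.ncard ≤ k) :
    (∃ c : E → ℕ, MProper ends c ∧
        (∀ e, c e ∈ Finset.Icc 1 (Finset.univ.sup (mdeg ends) + k)) ∧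
        ∀ e ∈ S, c e = pre e) ∨
    (k = 0 ∧ IsSimpleOddCycle ends) ∨
    IsExceptionalTriangle ends k := by
  have hdeg := degreeConditions_partialColoring (pre := pre) (hpal := hpal) hloop hk
    (by simp) hpredeg
  rcases exists_coloring_or_isCritical (isPartialExtension_partialColoring (hpal := hpal) hproper)
    with ⟨C, hC⟩ | ⟨e, hcrit⟩
  · exact .inl ⟨fun e => C e, fun e f hef heq => C.valid hef (Subtype.ext heq),
      fun e => (C e).2, fun e he => congrArg Subtype.val
        (hC e ⟨pre e, hpal e he⟩ (partialColoring_eq_some.2 ⟨he, rfl⟩))⟩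
  · exact .inr (hdeg.isSimpleOddCycle_or_isExceptionalTriangle hconn hcrit)
end

section
/- Let H be a connected graph in which every vertex is assigned a list ℓ(v) with |ℓ(v)| ≥ deg(v). Then H has a proper vertex-colouring choosing each vertex's colour from its list, unless H is a Gallai tree and |ℓ(v)| = deg(v) for every vertex v. -/
variable {V : Type*}

/-- `B` has no cut vertex: removing any vertex of `B` leaves the induced subgraph
(pre)connected. -/
def NoCutVertex (G : SimpleGraph V) (B : Set V) : Prop :=
  ∀ v ∈ B, (G.induce (B \ {v})).Preconnected

/-- `B` is a block of `G`: a maximal connected set of vertices without a cut vertex. -/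
def IsBlock (G : SimpleGraph V) (B : Set V) : Prop :=
  B.Nonempty ∧ (G.induce B).Connected ∧ NoCutVertex G B ∧
    ∀ B' : Set V, B ⊆ B' → (G.induce B').Connected → NoCutVertex G B' → B' = B

/-- The set `B` induces a complete graph. -/
def IsCliqueSet (G : SimpleGraph V) (B : Set V) : Prop :=
  ∀ u ∈ B, ∀ v ∈ B, u ≠ v → G.Adj u v

/-- The set `B` induces an odd cycle: connected, `2`-regular, of odd order `≥ 3`. -/
def IsOddCycleSet (G : SimpleGraph V) (B : Set V) : Prop :=
  Odd B.ncard ∧ 3 ≤ B.ncard ∧ (G.induce B).Connected ∧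
    ∀ v ∈ B, {u | u ∈ B ∧ G.Adj v u}.ncard = 2


/-- `G` is a Gallai tree: connected, and every block is a clique or an odd cycle. -/
def GallaiTree (G : SimpleGraph V) : Prop :=
  G.Connected ∧ ∀ B : Set V, IsBlock G B → IsCliqueSet G B ∨ IsOddCycleSet G B

/-!
The proof studies obstructions: connected sets of vertices whose lists are at least as large as the
degrees and yet admit no colouring. Deleting a vertex after giving it a colour of its list, and
removing that colour from the lists of its neighbours, leaves an obstruction. Colouring greedily
towards a given vertex therefore shows that in an obstruction every list is exactly as large as the
degree. A block that is not the whole graph lies in a smaller obstruction, obtained by deleting a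
vertex outside it, so by induction only obstructions without a cut vertex have to be understood.

There, the sizes being exact after the deletion of either end of an edge forces the two ends to have
the same list. All lists are thus one set of `d` colours, and the graph is `d`-regular. By induction
the graph minus a vertex `v` is a Gallai tree. If it has no cut vertex, regularity forces `v` to be
adjacent to everything and the graph is complete. Otherwise it has two end blocks, each of which
contains at least `d - 1` neighbours of `v`, whence `d = 2`. The graph minus `v` is 2-coloured with
one neighbour of `v` in each class, and counting edges shows that the classes have equal size, so
the order is odd.
-/

/-! ### Connectivity of induced subgraphs -/

section Connectivity

variable {G : SimpleGraph V} {S T : Set V} {v x : V}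

lemma exists_adj_of_preconnected_induce (hS : (G.induce S).Preconnected) (hTS : T ⊆ S)
    (hT : T.Nonempty) (hST : (S \ T).Nonempty) : ∃ a ∈ T, ∃ b ∈ S \ T, G.Adj a b := by
  obtain ⟨a, ha⟩ := hT
  obtain ⟨b, hbS, hbT⟩ := hST
  obtain ⟨p⟩ := hS ⟨a, hTS ha⟩ ⟨b, hbS⟩
  obtain ⟨d, -, hd₁, hd₂⟩ := p.exists_boundary_dart (Subtype.val ⁻¹' T) ha hbT
  exact ⟨d.fst, hd₁, d.snd, ⟨d.snd.2, hd₂⟩, d.adj⟩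

lemma connected_induce_of_forall_exists_adj (hx : x ∈ S)
    (h : ∀ T ⊆ S \ {x}, T.Nonempty → ∃ a ∈ T, ∃ b ∈ S \ T, G.Adj a b) :
    (G.induce S).Connected := by
  have hreach : ∀ y : S, (G.induce S).Reachable ⟨x, hx⟩ y := by
    by_contra! ⟨y, hy⟩
    let T : Set V := {z | ∃ hz : z ∈ S, ¬ (G.induce S).Reachable ⟨x, hx⟩ ⟨z, hz⟩}
    have hT : T ⊆ S \ {x} := by
      rintro z ⟨hz, hxz⟩
      refine ⟨hz, ?_⟩
      rintro rfl
      exact hxz .rfl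
    obtain ⟨a, ⟨haS, hxa⟩, b, ⟨hbS, hbT⟩, hab⟩ := h T hT ⟨y, y.2, hy⟩
    have hxb : (G.induce S).Reachable ⟨x, hx⟩ ⟨b, hbS⟩ := by
      by_contra hxb
      exact hbT ⟨hbS, hxb⟩
    have hba : (G.induce S).Adj ⟨b, hbS⟩ ⟨a, haS⟩ := hab.symm
    exact hxa (hxb.trans hba.reachable)
  exact (SimpleGraph.connected_iff_exists_forall_reachable _).2 ⟨_, hreach⟩

lemma exists_notMem_connected_induce_sdiff_singleton [Finite V] (hS : (G.induce S).Connected)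
    (hT : (G.induce T).Connected) (hTS : T ⊂ S) :
    ∃ v ∈ S \ T, (G.induce (S \ {v})).Connected := by
  obtain ⟨M, hTM, ⟨hM, hMS⟩, hmax⟩ := Finite.exists_le_maximal
    (p := fun M : Set V ↦ (G.induce M).Connected ∧ M ⊂ S) ⟨hT, hTS⟩
  have hMne : M.Nonempty := Set.nonempty_coe_sort.1 hM.nonempty
  obtain ⟨a, ha, v, ⟨hvS, hvM⟩, hav⟩ := exists_adj_of_preconnected_induce hS.preconnected
    hMS.subset hMne (Set.nonempty_of_ssubset hMS)
  have hMv : (G.induce (M ∪ {v})).Connected :=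
    SimpleGraph.connected_induce_union hM.preconnected (by simp) ha rfl hav
  have hMvS : M ∪ {v} = S := by
    by_contra hne
    have hss : M ∪ {v} ⊂ S :=
      (Set.union_subset hMS.subset (Set.singleton_subset_iff.2 hvS)).ssubset_of_ne hne
    exact hvM (hmax ⟨hMv, hss⟩ Set.subset_union_left (Or.inr rfl))
  refine ⟨v, ⟨hvS, fun hvT ↦ hvM (hTM hvT)⟩, ?_⟩
  rwa [← hMvS, Set.union_sdiff_right, Set.sdiff_singleton_eq_self hvM]

lemma NoCutVertex.connected_sdiff_singleton (hS : NoCutVertex G S) (hnt : S.Nontrivial)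
    (hv : v ∈ S) : (G.induce (S \ {v})).Connected := by
  obtain ⟨w, hw, hwv⟩ := hnt.exists_ne v
  exact (SimpleGraph.connected_iff _).2 ⟨hS v hv, ⟨⟨w, hw, hwv⟩⟩⟩

end Connectivity

/-! ### Blocks and pendant sets -/

/-- `B` is a block of the subgraph of `G` induced by `S`. -/
def IsBlockIn (G : SimpleGraph V) (S B : Set V) : Prop :=
  Maximal (fun B ↦ B ⊆ S ∧ (G.induce B).Connected ∧ NoCutVertex G B) B

/-- The subgraph of `G` induced by `S` is a Gallai tree. -/
def GallaiTreeOn (G : SimpleGraph V) (S : Set V) : Prop :=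
  (G.induce S).Connected ∧ ∀ B, IsBlockIn G S B → IsCliqueSet G B ∨ IsOddCycleSet G B

/-- `A` is a nonempty union of components of the subgraph induced by `S \ {x}`; as long as `S` is
connected, `x` is then the only vertex of `S \ A` with neighbours in `A`. A minimal such `A`
together with `x` is an end block of that subgraph. -/
structure IsPendant (G : SimpleGraph V) (S : Set V) (x : V) (A : Set V) : Prop where
  mem : x ∈ S
  subset : A ⊆ S \ {x}
  nonempty : A.Nonempty
  adj_mem : ∀ a ∈ A, ∀ b ∈ S, G.Adj a b → b ∈ insert x A

section Blocks

variable {G : SimpleGraph V} {S A B : Set V} {v x : V}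

lemma gallaiTree_of_gallaiTreeOn_univ (h : GallaiTreeOn G Set.univ) : GallaiTree G := by
  refine ⟨(SimpleGraph.induceUnivIso G).connected_iff.1 h.1, fun B hB ↦ h.2 B ?_⟩
  obtain ⟨-, hconn, hcut, hmax⟩ := hB
  exact ⟨⟨B.subset_univ, hconn, hcut⟩, fun B' hB' hBB' ↦ (hmax B' hBB' hB'.2.1 hB'.2.2).subset⟩

lemma isBlockIn_self (hS : (G.induce S).Connected) (hcut : NoCutVertex G S) : IsBlockIn G S S :=
  ⟨⟨subset_rfl, hS, hcut⟩, fun _ hB _ ↦ hB.1⟩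

lemma IsBlockIn.sdiff_singleton (hB : IsBlockIn G S B) (hv : v ∉ B) : IsBlockIn G (S \ {v}) B :=
  ⟨⟨Set.subset_sdiff_singleton hB.1.1 hv, hB.1.2⟩,
    fun _ hB' hBB' ↦ hB.2 ⟨hB'.1.trans Set.sdiff_subset, hB'.2⟩ hBB'⟩

lemma IsPendant.notMem (hA : IsPendant G S x A) : x ∉ A := fun hx ↦ (hA.subset hx).2 rfl

lemma IsPendant.insert_subset (hA : IsPendant G S x A) : insert x A ⊆ S :=
  Set.insert_subset hA.mem (hA.subset.trans Set.sdiff_subset)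

lemma IsPendant.connected_insert (hA : IsPendant G S x A) (hS : (G.induce S).Connected) :
    (G.induce (insert x A)).Connected := by
  refine connected_induce_of_forall_exists_adj (Set.mem_insert x A) fun Q hQ hQne ↦ ?_
  rw [Set.insert_sdiff_self_of_notMem hA.notMem] at hQ
  obtain ⟨a, ha, b, ⟨hbS, hbQ⟩, hab⟩ := exists_adj_of_preconnected_induce hS.preconnected
    ((hQ.trans hA.subset).trans Set.sdiff_subset) hQne ⟨x, hA.mem, fun hx ↦ hA.notMem (hQ hx)⟩
  exact ⟨a, ha, b, ⟨hA.adj_mem a (hQ ha) b hbS hab, hbQ⟩, hab⟩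

lemma IsPendant.noCutVertex_insert (hA : IsPendant G S x A)
    (hmin : ∀ y, ∀ Q ⊂ A, ¬ IsPendant G S y Q) : NoCutVertex G (insert x A) := by
  intro y hy
  have hexit : ∀ Q ⊂ A, Q.Nonempty → y ∉ Q → ∃ a ∈ Q, ∃ b ∈ (insert x A \ {y}) \ Q, G.Adj a b := by
    intro Q hQA hQ hyQ
    by_contra! hnone
    refine hmin y Q hQA ⟨hA.insert_subset hy, ?_, hQ, fun a ha b hb hab ↦ ?_⟩
    · exact Set.subset_sdiff_singleton ((hQA.subset.trans hA.subset).trans Set.sdiff_subset) hyQ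
    · have hbA : b ∈ insert x A := hA.adj_mem a (hQA.subset ha) b hb hab
      by_contra hbQ
      rw [Set.mem_insert_iff, not_or] at hbQ
      exact hnone a ha b ⟨⟨hbA, hbQ.1⟩, hbQ.2⟩ hab
  obtain ⟨r, hr, hQr⟩ : ∃ r ∈ insert x A \ {y}, ∀ Q ⊆ (insert x A \ {y}) \ {r}, Q ⊂ A := by
    rcases eq_or_ne x y with rfl | hxy
    · obtain ⟨r, hr⟩ := hA.nonempty
      rw [Set.insert_sdiff_self_of_notMem hA.notMem]
      exact ⟨r, hr, fun Q hQ ↦ hQ.trans_ssubset (Set.sdiff_singleton_ssubset.2 hr)⟩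
    · refine ⟨x, ⟨Set.mem_insert x A, hxy⟩, fun Q hQ ↦ ?_⟩
      have hyA : y ∈ A := hy.resolve_left hxy.symm
      refine Set.ssubset_of_subset_of_ssubset (fun z hz ↦ ?_) (Set.sdiff_singleton_ssubset.2 hyA)
      obtain ⟨⟨hz, hzy⟩, hzx⟩ := hQ hz
      exact ⟨hz.resolve_left hzx, hzy⟩
  exact (connected_induce_of_forall_exists_adj hr fun Q hQ hQne ↦
    hexit Q (hQr Q hQ) hQne fun hyQ ↦ (hQ hyQ).1.2 rfl).preconnected

lemma IsPendant.eq_insert_of_noCutVertex (hA : IsPendant G S x A) (hBS : B ⊆ S)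
    (hAB : insert x A ⊆ B) (hB : NoCutVertex G B) : B = insert x A := by
  refine hAB.antisymm' fun z hz ↦ ?_
  by_contra hzA
  rw [Set.mem_insert_iff, not_or] at hzA
  have hAB' : A ⊆ B \ {x} :=
    Set.subset_sdiff_singleton ((Set.subset_insert x A).trans hAB) hA.notMem
  obtain ⟨a, ha, b, ⟨⟨hbB, hbx⟩, hbA⟩, hab⟩ := exists_adj_of_preconnected_induce
    (hB x (hAB (Set.mem_insert x A))) hAB' hA.nonempty ⟨z, ⟨hz, hzA.1⟩, hzA.2⟩
  exact (hA.adj_mem a ha b (hBS hbB) hab).elim hbx hbA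

lemma IsPendant.exists_isBlockIn [Finite V] (hA : IsPendant G S x A)
    (hS : (G.induce S).Connected) :
    ∃ y, ∃ A' ⊆ A, IsPendant G S y A' ∧ IsBlockIn G S (insert y A') := by
  obtain ⟨A', hA'A, ⟨y, hA'⟩, hmin⟩ :=
    Finite.exists_le_minimal (p := fun A ↦ ∃ y, IsPendant G S y A) ⟨x, hA⟩
  have hcut : NoCutVertex G (insert y A') :=
    hA'.noCutVertex_insert fun z Q hQ hz ↦ hQ.not_subset (hmin ⟨z, hz⟩ hQ.subset)
  exact ⟨y, A', hA'A, hA', ⟨hA'.insert_subset, hA'.connected_insert hS, hcut⟩,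
    fun _ hB hle ↦ (hA'.eq_insert_of_noCutVertex hB.1 hle hB.2.2).subset⟩

lemma exists_disjoint_isPendant_of_not_noCutVertex (hS : ¬ NoCutVertex G S) :
    ∃ x A B, Disjoint A B ∧ IsPendant G S x A ∧ IsPendant G S x B := by
  simp only [NoCutVertex, not_forall] at hS
  obtain ⟨x, hx, hdisc⟩ := hS
  obtain ⟨r, hr⟩ : (S \ {x}).Nonempty := by
    by_contra! hempty
    rw [hempty] at hdisc
    exact hdisc fun a ↦ a.2.elim
  obtain ⟨A, hA, hAne, hclosed⟩ : ∃ A ⊆ (S \ {x}) \ {r}, A.Nonempty ∧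
      ∀ a ∈ A, ∀ b ∈ (S \ {x}) \ A, ¬ G.Adj a b := by
    by_contra! hexit
    exact hdisc (connected_induce_of_forall_exists_adj hr hexit).preconnected
  refine ⟨x, A, (S \ {x}) \ A, Set.disjoint_sdiff_right,
    ⟨hx, hA.trans Set.sdiff_subset, hAne, fun a ha b hb hab ↦ ?_⟩,
    ⟨hx, Set.sdiff_subset, ⟨r, hr, fun hrA ↦ (hA hrA).2 rfl⟩, fun a ha b hb hab ↦ ?_⟩⟩
  · by_contra hbA
    rw [Set.mem_insert_iff, not_or] at hbA
    exact hclosed a ha b ⟨⟨hb, hbA.1⟩, hbA.2⟩ hab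
  · by_contra hbA
    rw [Set.mem_insert_iff, not_or] at hbA
    have hbA' : b ∈ A := by_contra fun hb' ↦ hbA.2 ⟨⟨hb, hbA.1⟩, hb'⟩
    exact hclosed b hbA' a ha hab.symm

lemma IsPendant.exists_adj_of_noCutVertex (hA : IsPendant G (S \ {v}) x A)
    (hS : NoCutVertex G S) (hv : v ∈ S) : ∃ a ∈ A, G.Adj a v := by
  have hvA : v ∉ A := fun h ↦ (hA.subset h).1.2 rfl
  have hAS : A ⊆ S \ {x} := hA.subset.trans (Set.sdiff_subset_sdiff_left Set.sdiff_subset)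
  obtain ⟨a, ha, b, ⟨⟨hbS, hbx⟩, hbA⟩, hab⟩ := exists_adj_of_preconnected_induce
    (hS x hA.mem.1) hAS hA.nonempty ⟨v, ⟨hv, Ne.symm hA.mem.2⟩, hvA⟩
  have hbv : b = v := by
    by_contra hbv
    exact (hA.adj_mem a ha b ⟨hbS, hbv⟩ hab).elim hbx hbA
  exact ⟨a, ha, hbv ▸ hab⟩

end Blocks

/-! ### Degrees into a set of vertices -/

/-- The number of neighbours of `v` in `S`. For `v ∈ S` it is the degree of `v` in the subgraph
induced by `S`, but `v` need not lie in `S`. -/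
noncomputable def degreeIn (G : SimpleGraph V) (S : Set V) (v : V) : ℕ :=
  {u | u ∈ S ∧ G.Adj v u}.ncard

section Degrees

variable {G : SimpleGraph V} {S B P Q : Set V} {u v : V} {d : ℕ}

lemma degreeIn_univ [Fintype V] [DecidableRel G.Adj] : degreeIn G Set.univ v = G.degree v := by
  rw [degreeIn, ← G.card_neighborFinset_eq_degree, ← Set.ncard_coe_finset]
  congr 1
  ext
  simp

lemma degreeIn_sdiff_singleton_of_not_adj (huv : ¬ G.Adj u v) :
    degreeIn G (S \ {v}) u = degreeIn G S u := by
  unfold degreeIn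
  congr 1
  ext w
  have : G.Adj u w → w ≠ v := by rintro huw rfl; exact huv huw
  simp only [Set.mem_sdiff, Set.mem_singleton_iff, Set.mem_ofPred_eq]
  tauto

lemma degreeIn_sdiff_singleton_self : degreeIn G (S \ {v}) v = degreeIn G S v :=
  degreeIn_sdiff_singleton_of_not_adj G.irrefl

lemma degreeIn_eq_ncard (hS : ∀ u ∈ S, G.Adj v u) : degreeIn G S v = S.ncard := by
  rw [degreeIn, Set.sep_eq_self_iff_mem_true.2 hS]

lemma sum_degreeIn_comm (P Q : Finset V) :
    ∑ a ∈ P, degreeIn G Q a = ∑ b ∈ Q, degreeIn G P b := by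
  classical
  have habove : ∀ a, degreeIn G Q a = (Q.bipartiteAbove G.Adj a).card := fun a ↦ by
    simp [degreeIn, ← Set.ncard_coe_finset]
  have hbelow : ∀ b, degreeIn G P b = (P.bipartiteBelow G.Adj b).card := fun b ↦ by
    simp [degreeIn, ← Set.ncard_coe_finset, G.adj_comm b]
  simp only [habove, hbelow]
  exact Finset.sum_card_bipartiteAbove_eq_sum_card_bipartiteBelow _

variable [Finite V]

lemma degreeIn_sdiff_singleton_add_one (hv : v ∈ S) (huv : G.Adj u v) :
    degreeIn G (S \ {v}) u + 1 = degreeIn G S u := by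
  have hset : {w | w ∈ S \ {v} ∧ G.Adj u w} = {w | w ∈ S ∧ G.Adj u w} \ {v} := by
    ext w
    simp only [Set.mem_sdiff, Set.mem_singleton_iff, Set.mem_ofPred_eq]
    tauto
  have hmem : v ∈ {w | w ∈ S ∧ G.Adj u w} := ⟨hv, huv⟩
  rw [degreeIn, hset, degreeIn, Set.ncard_sdiff_singleton_add_one hmem]

lemma degreeIn_mono (hPQ : P ⊆ Q) : degreeIn G P v ≤ degreeIn G Q v :=
  Set.ncard_le_ncard fun _ hu ↦ ⟨hPQ hu.1, hu.2⟩

lemma degreeIn_union (hPQ : Disjoint P Q) :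
    degreeIn G (P ∪ Q) v = degreeIn G P v + degreeIn G Q v := by
  rw [degreeIn, degreeIn, degreeIn, ← Set.ncard_union_eq]
  · congr 1
    ext
    simp only [Set.mem_union, Set.mem_ofPred_eq]
    tauto
  · exact hPQ.mono (fun _ h ↦ h.1) (fun _ h ↦ h.1)

lemma degreeIn_pos_iff : 0 < degreeIn G S v ↔ ∃ u ∈ S, G.Adj v u := Set.ncard_pos

lemma degreeIn_pos_of_preconnected (hS : (G.induce S).Preconnected) (hnt : S.Nontrivial)
    (hv : v ∈ S) : 0 < degreeIn G S v := by
  obtain ⟨w, hw, hwv⟩ := hnt.exists_ne v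
  obtain ⟨a, rfl, b, hb, hab⟩ := exists_adj_of_preconnected_induce hS
    (Set.singleton_subset_iff.2 hv) (Set.singleton_nonempty v) ⟨w, hw, hwv⟩
  exact degreeIn_pos_iff.2 ⟨b, hb.1, hab⟩

lemma isCliqueSet_iff_degreeIn_add_one_eq :
    IsCliqueSet G B ↔ ∀ u ∈ B, degreeIn G B u + 1 = B.ncard := by
  refine forall₂_congr fun u hu ↦ ?_
  rw [← Set.ncard_sdiff_singleton_add_one hu, Nat.add_right_cancel_iff,
    ← degreeIn_sdiff_singleton_self]
  refine ⟨fun h ↦ degreeIn_eq_ncard fun w hw ↦ h w hw.1 (Ne.symm hw.2), fun h w hw huw ↦ ?_⟩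
  have hsep := Set.eq_of_subset_of_ncard_le (Set.sep_subset (B \ {u}) (G.Adj u)) h.ge
  exact (hsep.ge ⟨hw, huw.symm⟩).2

lemma exists_forall_degreeIn_eq (hB : B.Nonempty) (h : IsCliqueSet G B ∨ IsOddCycleSet G B) :
    ∃ r < B.ncard, ∀ u ∈ B, degreeIn G B u = r := by
  rcases h with hclique | ⟨-, hcard, -, hdeg⟩
  · have hpos : 0 < B.ncard := hB.ncard_pos
    refine ⟨B.ncard - 1, by omega, fun u hu ↦ ?_⟩
    have := isCliqueSet_iff_degreeIn_add_one_eq.1 hclique u hu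
    omega
  · exact ⟨2, hcard, hdeg⟩

lemma ncard_eq_ncard_of_degreeIn_insert_eq (hd : d ≠ 0) (hvP : v ∉ P) (hvQ : v ∉ Q)
    (hP : ∀ a ∈ P, degreeIn G (insert v Q) a = d) (hQ : ∀ b ∈ Q, degreeIn G (insert v P) b = d)
    (hv : degreeIn G P v = degreeIn G Q v) : P.ncard = Q.ncard := by
  classical
  have hcount : ∀ P Q : Finset V, v ∉ Q → (∀ a ∈ P, degreeIn G (insert v (Q : Set V)) a = d) →
      P.card * d = degreeIn G P v + ∑ b ∈ Q, degreeIn G P b := by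
    intro P Q hvQ hP
    rw [← Finset.sum_insert hvQ, ← sum_degreeIn_comm, Finset.coe_insert,
      Finset.sum_const_nat hP]
  lift P to Finset V using P.toFinite
  lift Q to Finset V using Q.toFinite
  rw [Set.ncard_coe_finset, Set.ncard_coe_finset]
  refine Nat.eq_of_mul_eq_mul_right (Nat.pos_of_ne_zero hd) ?_
  rw [hcount P Q hvQ hP, hcount Q P hvP hQ, hv, sum_degreeIn_comm]

lemma odd_ncard_of_regular_of_isIndepSet (hd : d ≠ 0) (hv : v ∈ S)
    (hreg : ∀ u ∈ S, degreeIn G S u = d) (hP : G.IsIndepSet P) (hQ : G.IsIndepSet Q)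
    (hPQ : Disjoint P Q) (hunion : P ∪ Q = S \ {v}) (hvPQ : degreeIn G P v = degreeIn G Q v) :
    Odd S.ncard := by
  have hclass : ∀ P Q : Set V, G.IsIndepSet P → P ∪ Q = S \ {v} →
      v ∉ P ∧ ∀ a ∈ P, degreeIn G (insert v Q) a = d := by
    intro P Q hP hunion
    have hPS : P ⊆ S \ {v} := hunion ▸ Set.subset_union_left
    refine ⟨fun hvP ↦ (hPS hvP).2 rfl, fun a ha ↦ ?_⟩
    rw [← hreg a (hPS ha).1]
    refine congrArg Set.ncard (Set.ext fun b ↦ and_congr_left fun hab ↦ ?_)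
    have hbP : b ∉ P := fun hb ↦ hP ha hb hab.ne hab
    rw [← Set.insert_sdiff_self_of_mem hv, ← hunion]
    simp [hbP]
  obtain ⟨hvP, hPdeg⟩ := hclass P Q hP hunion
  obtain ⟨hvQ, hQdeg⟩ := hclass Q P hQ (Set.union_comm P Q ▸ hunion)
  have hcard : P.ncard = Q.ncard :=
    ncard_eq_ncard_of_degreeIn_insert_eq hd hvP hvQ hPdeg hQdeg hvPQ
  refine ⟨Q.ncard, ?_⟩
  rw [← Set.ncard_sdiff_singleton_add_one hv, ← hunion, Set.ncard_union_eq hPQ, hcard, two_mul]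

end Degrees

/-! ### Regular graphs one vertex away from a Gallai tree -/

section Regular

variable [Finite V] {G : SimpleGraph V} {S A B : Set V} {v x : V} {d r : ℕ}

lemma eq_add_one_and_forall_adj_of_regular (hv : v ∈ S) (hreg : ∀ u ∈ S, degreeIn G S u = d)
    (hAB : A ⊆ B) (hBS : B ⊆ S \ {v}) (hB : ∀ u ∈ B, degreeIn G B u = r)
    (hA : ∀ a ∈ A, ∀ b ∈ S \ {v}, G.Adj a b → b ∈ B) (hav : ∃ a ∈ A, G.Adj a v) :
    d = r + 1 ∧ ∀ a ∈ A, G.Adj a v := by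
  have hdeg : ∀ a ∈ A, degreeIn G (S \ {v}) a = r := by
    intro a ha
    rw [← hB a (hAB ha)]
    exact congrArg Set.ncard (Set.ext fun b ↦
      ⟨fun hb ↦ ⟨hA a ha b hb.1 hb.2, hb.2⟩, fun hb ↦ ⟨hBS hb.1, hb.2⟩⟩)
  have hd : d = r + 1 := by
    obtain ⟨a, ha, hav⟩ := hav
    rw [← hreg a (hBS (hAB ha)).1, ← degreeIn_sdiff_singleton_add_one hv hav, hdeg a ha]
  refine ⟨hd, fun a ha ↦ by_contra fun hav ↦ ?_⟩
  have hda := hreg a (hBS (hAB ha)).1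
  rw [← degreeIn_sdiff_singleton_of_not_adj hav, hdeg a ha] at hda
  omega

lemma IsPendant.exists_subset_forall_adj (hA : IsPendant G (S \ {v}) x A)
    (hT : GallaiTreeOn G (S \ {v})) (hS : NoCutVertex G S) (hv : v ∈ S)
    (hreg : ∀ u ∈ S, degreeIn G S u = d) :
    2 ≤ d ∧ ∃ A' ⊆ A, d ≤ A'.ncard + 1 ∧ ∀ a ∈ A', G.Adj a v := by
  obtain ⟨y, A', hA'A, hA', hB⟩ := hA.exists_isBlockIn hT.1
  obtain ⟨r, hr, hBreg⟩ := exists_forall_degreeIn_eq (Set.insert_nonempty y A') (hT.2 _ hB)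
  obtain ⟨hd, hadj⟩ := eq_add_one_and_forall_adj_of_regular hv hreg (Set.subset_insert y A')
    hB.1.1 hBreg hA'.adj_mem (hA'.exists_adj_of_noCutVertex hS hv)
  have hrpos : 0 < r := by
    obtain ⟨a, ha⟩ := hA'.nonempty
    have hnt : (insert y A').Nontrivial :=
      ⟨y, Set.mem_insert y A', a, Or.inr ha, (hA'.subset ha).2 ∘ Eq.symm⟩
    rw [← hBreg y (Set.mem_insert y A')]
    exact degreeIn_pos_of_preconnected hB.1.2.1.preconnected hnt (Set.mem_insert y A')
  rw [Set.ncard_insert_of_notMem hA'.notMem] at hr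
  exact ⟨by omega, A', hA'A, by omega, hadj⟩

lemma isCliqueSet_of_regular_of_noCutVertex_sdiff_singleton (hS : (G.induce S).Connected)
    (hv : v ∈ S) (hreg : ∀ u ∈ S, degreeIn G S u = d) (hT : GallaiTreeOn G (S \ {v}))
    (hcut : NoCutVertex G (S \ {v})) : IsCliqueSet G S := by
  obtain ⟨w, hw⟩ : (S \ {v}).Nonempty := Set.nonempty_coe_sort.1 hT.1.nonempty
  obtain ⟨r, -, hr⟩ := exists_forall_degreeIn_eq ⟨w, hw⟩ (hT.2 _ (isBlockIn_self hT.1 hcut))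
  obtain ⟨a, ha, hva⟩ := degreeIn_pos_iff.1 <| degreeIn_sdiff_singleton_self (G := G) ▸
    degreeIn_pos_of_preconnected hS.preconnected ⟨v, hv, w, hw.1, Ne.symm hw.2⟩ hv
  have hadj := (eq_add_one_and_forall_adj_of_regular hv hreg subset_rfl subset_rfl hr
    (fun _ _ b hb _ ↦ hb) ⟨a, ha, hva.symm⟩).2
  have hd : d = (S \ {v}).ncard := by
    rw [← hreg v hv, ← degreeIn_sdiff_singleton_self, degreeIn_eq_ncard fun u hu ↦ (hadj u hu).symm]
  refine isCliqueSet_iff_degreeIn_add_one_eq.2 fun u hu ↦ ?_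
  rw [hreg u hu, hd, Set.ncard_sdiff_singleton_add_one hv]

-- Two end blocks of `S - v` each contribute at least `d - 1` neighbours of `v`, so `2 (d - 1) ≤ d`.
lemma eq_two_of_regular_of_not_noCutVertex_sdiff_singleton (hS : NoCutVertex G S) (hv : v ∈ S)
    (hreg : ∀ u ∈ S, degreeIn G S u = d) (hT : GallaiTreeOn G (S \ {v}))
    (hcut : ¬ NoCutVertex G (S \ {v})) : d = 2 := by
  obtain ⟨x, A₁, A₂, hdisj, hA₁, hA₂⟩ := exists_disjoint_isPendant_of_not_noCutVertex hcut
  obtain ⟨hd, B₁, hB₁, hcard₁, hadj₁⟩ := hA₁.exists_subset_forall_adj hT hS hv hreg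
  obtain ⟨-, B₂, hB₂, hcard₂, hadj₂⟩ := hA₂.exists_subset_forall_adj hT hS hv hreg
  have hsub : B₁ ∪ B₂ ⊆ S := Set.union_subset
    (fun u hu ↦ (hA₁.subset (hB₁ hu)).1.1) (fun u hu ↦ (hA₂.subset (hB₂ hu)).1.1)
  have hsum : B₁.ncard + B₂.ncard ≤ d :=
    calc B₁.ncard + B₂.ncard = degreeIn G B₁ v + degreeIn G B₂ v := by
          rw [degreeIn_eq_ncard fun u hu ↦ (hadj₁ u hu).symm,
            degreeIn_eq_ncard fun u hu ↦ (hadj₂ u hu).symm]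
      _ = degreeIn G (B₁ ∪ B₂) v := (degreeIn_union (hdisj.mono hB₁ hB₂)).symm
      _ ≤ degreeIn G S v := degreeIn_mono hsub
      _ = d := hreg v hv
  omega

end Regular

/-! ### List colourings -/

/-- `c` restricts to a proper colouring of the subgraph induced by `S` with colours from the
lists `l`; its values outside `S` are irrelevant. -/
def IsListColoringOn {α : Type*} (G : SimpleGraph V) (S : Set V) (l : V → Finset α)
    (c : V → α) : Prop :=
  (∀ v ∈ S, c v ∈ l v) ∧ ∀ u ∈ S, ∀ v ∈ S, G.Adj u v → c u ≠ c v

/-- The lists `l` are at least as large as the degrees in the subgraph induced by `S`, and yet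
admit no proper colouring of it. -/
structure IsObstruction {α : Type*} (G : SimpleGraph V) (S : Set V) (l : V → Finset α) :
    Prop where
  degreeIn_le : ∀ v ∈ S, degreeIn G S v ≤ (l v).card
  not_isListColoringOn : ∀ c, ¬ IsListColoringOn G S l c

open Classical in
/-- The lists that remain once `v` has received colour `k`: that colour is removed from the lists
of the neighbours of `v`. -/
noncomputable def pruneLists {α : Type*} (G : SimpleGraph V) (l : V → Finset α) (v : V) (k : α)
    (u : V) : Finset α :=
  (l u).filter fun j ↦ G.Adj u v → j ≠ k

section ListColoring

variable {α : Type*} {G : SimpleGraph V} {S : Set V} {l : V → Finset α} {u v w : V} {k : α}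

lemma mem_pruneLists {j : α} : j ∈ pruneLists G l v k u ↔ j ∈ l u ∧ (G.Adj u v → j ≠ k) := by
  simp [pruneLists]

lemma pruneLists_of_not_adj (huv : ¬ G.Adj u v) : pruneLists G l v k u = l u :=
  Finset.ext fun _ ↦ mem_pruneLists.trans (and_iff_left fun h ↦ absurd h huv)

lemma pruneLists_of_notMem (hk : k ∉ l u) : pruneLists G l v k u = l u :=
  Finset.ext fun _ ↦ mem_pruneLists.trans (and_iff_left_of_imp fun hj _ hjk ↦ hk (hjk ▸ hj))

lemma card_le_card_pruneLists_add_one : (l u).card ≤ (pruneLists G l v k u).card + 1 := by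
  classical
  have hsub : (l u).erase k ⊆ pruneLists G l v k u := fun j hj ↦
    mem_pruneLists.2 ⟨Finset.mem_of_mem_erase hj, fun _ ↦ Finset.ne_of_mem_erase hj⟩
  have := Finset.card_le_card hsub
  have := Finset.pred_card_le_card_erase (s := l u) (a := k)
  omega

lemma IsListColoringOn.exists_of_sdiff_singleton {c : V → α}
    (hc : IsListColoringOn G (S \ {v}) l c) (hk : k ∈ l v)
    (hck : ∀ u ∈ S \ {v}, G.Adj u v → c u ≠ k) : ∃ c', IsListColoringOn G S l c' := by
  classical
  refine ⟨Function.update c v k, fun u hu ↦ ?_, fun u hu w hw huw ↦ ?_⟩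
  · rcases eq_or_ne u v with rfl | huv
    · rwa [Function.update_self]
    · rw [Function.update_of_ne huv]
      exact hc.1 u ⟨hu, huv⟩
  · rcases eq_or_ne u v with rfl | huv
    · rw [Function.update_self, Function.update_of_ne huw.ne']
      exact (hck w ⟨hw, huw.ne'⟩ huw.symm).symm
    · rw [Function.update_of_ne huv]
      rcases eq_or_ne w v with rfl | hwv
      · rw [Function.update_self]
        exact hck u ⟨hu, huv⟩ huw
      · rw [Function.update_of_ne hwv]
        exact hc.2 u ⟨hu, huv⟩ w ⟨hw, hwv⟩ huw

lemma IsObstruction.card_eq_zero_of_singleton (h : IsObstruction G {w} l) : (l w).card = 0 := by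
  rw [Finset.card_eq_zero, Finset.eq_empty_iff_forall_notMem]
  refine fun k hk ↦ h.not_isListColoringOn (fun _ ↦ k) ⟨?_, ?_⟩
  · rintro _ rfl
    exact hk
  · rintro _ rfl _ rfl hadj
    exact absurd hadj G.irrefl

variable [Finite V]

lemma IsObstruction.sdiff_singleton (h : IsObstruction G S l) (hv : v ∈ S) (hk : k ∈ l v) :
    IsObstruction G (S \ {v}) (pruneLists G l v k) := by
  refine ⟨fun u hu ↦ ?_, fun c hc ↦ ?_⟩
  · have hdeg := h.degreeIn_le u hu.1
    by_cases huv : G.Adj u v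
    · have := degreeIn_sdiff_singleton_add_one hv huv
      have := card_le_card_pruneLists_add_one (G := G) (l := l) (u := u) (v := v) (k := k)
      omega
    · rwa [degreeIn_sdiff_singleton_of_not_adj huv, pruneLists_of_not_adj huv]
  · have hmem : ∀ u ∈ S \ {v}, c u ∈ l u ∧ (G.Adj u v → c u ≠ k) := fun u hu ↦
      mem_pruneLists.1 (hc.1 u hu)
    obtain ⟨c', hc'⟩ := IsListColoringOn.exists_of_sdiff_singleton (S := S)
      ⟨fun u hu ↦ (hmem u hu).1, hc.2⟩ hk fun u hu ↦ (hmem u hu).2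
    exact h.not_isListColoringOn c' hc'

lemma IsObstruction.nonempty (h : IsObstruction G S l) (hS : (G.induce S).Connected)
    (hnt : S.Nontrivial) (hv : v ∈ S) : (l v).Nonempty :=
  Finset.card_pos.1 <|
    (degreeIn_pos_of_preconnected hS.preconnected hnt hv).trans_le (h.degreeIn_le v hv)

lemma IsObstruction.exists_sdiff_singleton (h : IsObstruction G S l) (hS : (G.induce S).Connected)
    (hnt : S.Nontrivial) (hv : v ∈ S) : ∃ l' : V → Finset α, IsObstruction G (S \ {v}) l' :=
  (h.nonempty hS hnt hv).elim fun _ hk ↦ ⟨_, h.sdiff_singleton hv hk⟩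

-- Greedy colouring: delete vertices other than `w` one at a time, keeping the graph connected.
lemma IsObstruction.card_eq_degreeIn (h : IsObstruction G S l) (hS : (G.induce S).Connected)
    (hw : w ∈ S) : (l w).card = degreeIn G S w := by
  induction hn : S.ncard using Nat.strong_induction_on generalizing S l with
  | _ n ih =>
    refine (h.degreeIn_le w hw).antisymm' ?_
    rcases (Set.singleton_subset_iff.2 hw).eq_or_ssubset with rfl | hwS
    · rw [h.card_eq_zero_of_singleton]
      exact Nat.zero_le _
    obtain ⟨v, ⟨hv, hvw⟩, hT⟩ :=
      exists_notMem_connected_induce_sdiff_singleton hS (by simp) hwS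
    obtain ⟨k, hk⟩ := h.nonempty hS ⟨v, hv, w, hw, hvw⟩ hv
    have hcard := ih _ (hn ▸ Set.ncard_sdiff_singleton_lt_of_mem hv) (h.sdiff_singleton hv hk) hT
      ⟨hw, Ne.symm hvw⟩ rfl
    by_cases hwv : G.Adj w v
    · rw [← degreeIn_sdiff_singleton_add_one hv hwv, ← hcard]
      exact card_le_card_pruneLists_add_one
    · rw [pruneLists_of_not_adj hwv, degreeIn_sdiff_singleton_of_not_adj hwv] at hcard
      exact hcard.le

lemma IsObstruction.subset_of_adj (h : IsObstruction G S l) (hu : u ∈ S) (hv : v ∈ S)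
    (hT : (G.induce (S \ {u})).Connected) (huv : G.Adj u v) : l u ⊆ l v := by
  intro k hk
  by_contra hkv
  have hcard := (h.sdiff_singleton hu hk).card_eq_degreeIn hT ⟨hv, huv.ne'⟩
  rw [pruneLists_of_notMem hkv] at hcard
  have := degreeIn_sdiff_singleton_add_one hu huv.symm
  have := h.degreeIn_le v hv
  omega

lemma IsObstruction.eq_of_noCutVertex (h : IsObstruction G S l) (hS : (G.induce S).Connected)
    (hcut : NoCutVertex G S) (hnt : S.Nontrivial) (hu : u ∈ S) (hv : v ∈ S) : l u = l v := by
  by_contra hne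
  obtain ⟨a, ⟨haS, ha⟩, b, ⟨hbS, hb⟩, hab⟩ := exists_adj_of_preconnected_induce hS.preconnected
    (Set.sep_subset S fun w ↦ l w = l v) ⟨v, hv, rfl⟩ ⟨u, hu, fun hu' ↦ hne hu'.2⟩
  have hle : ∀ a ∈ S, ∀ b ∈ S, G.Adj a b → l a ⊆ l b := fun a ha b hb ↦
    h.subset_of_adj ha hb (hcut.connected_sdiff_singleton hnt ha)
  exact hb ⟨hbS, ((hle b hbS a haS hab.symm).antisymm (hle a haS b hbS hab)).trans ha⟩

lemma IsObstruction.exists_isListColoringOn_sdiff_singleton (h : IsObstruction G S l)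
    (hT : (G.induce (S \ {v})).Connected) (hv : v ∈ S) (hu : u ∈ S) (huv : G.Adj u v) :
    ∃ c, IsListColoringOn G (S \ {v}) l c := by
  by_contra! hnone
  have hT' : IsObstruction G (S \ {v}) l :=
    ⟨fun w hw ↦ (degreeIn_mono Set.sdiff_subset).trans (h.degreeIn_le w hw.1), hnone⟩
  have := hT'.card_eq_degreeIn hT ⟨hu, huv.ne⟩
  have := degreeIn_sdiff_singleton_add_one hv huv
  have := h.degreeIn_le u hu
  omega

lemma IsObstruction.odd_ncard {L : Finset α} (h : IsObstruction G S fun _ ↦ L) (hL : L.card = 2)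
    (hreg : ∀ u ∈ S, degreeIn G S u = 2) (hv : v ∈ S) (hT : (G.induce (S \ {v})).Connected) :
    Odd S.ncard := by
  classical
  obtain ⟨u, hu, hvu⟩ := degreeIn_pos_iff.1 (hreg v hv ▸ two_pos)
  obtain ⟨c, hc⟩ := h.exists_isListColoringOn_sdiff_singleton hT hv hu hvu.symm
  obtain ⟨p, q, hpq, hLpq⟩ := Finset.card_eq_two.1 hL
  let colorClass (k : α) : Set V := {u | u ∈ S \ {v} ∧ c u = k}
  have hindep : ∀ k, G.IsIndepSet (colorClass k) := fun k a ha b hb _ hab ↦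
    hc.2 a ha.1 b hb.1 hab (ha.2.trans hb.2.symm)
  have hdisj : Disjoint (colorClass p) (colorClass q) :=
    Set.disjoint_left.2 fun _ hp hq ↦ hpq (hp.2.symm.trans hq.2)
  have hunion : colorClass p ∪ colorClass q = S \ {v} := by
    ext u
    have : u ∈ S \ {v} → c u = p ∨ c u = q := fun hu ↦ by simpa [hLpq] using hc.1 u hu
    simp only [colorClass, Set.mem_union, Set.mem_ofPred_eq]
    tauto
  have hpos : ∀ k ∈ L, 0 < degreeIn G (colorClass k) v := by
    intro k hk
    by_contra hzero
    obtain ⟨c', hc'⟩ := hc.exists_of_sdiff_singleton hk fun u hu huv hcu ↦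
      hzero (degreeIn_pos_iff.2 ⟨u, ⟨hu, hcu⟩, huv.symm⟩)
    exact h.not_isListColoringOn c' hc'
  have hsum : degreeIn G (colorClass p) v + degreeIn G (colorClass q) v = 2 := by
    rw [← degreeIn_union hdisj, hunion, degreeIn_sdiff_singleton_self, hreg v hv]
  have hvp := hpos p (by simp [hLpq])
  have hvq := hpos q (by simp [hLpq])
  exact odd_ncard_of_regular_of_isIndepSet two_ne_zero hv hreg (hindep p) (hindep q) hdisj hunion
    (by omega)

lemma IsObstruction.isCliqueSet_or_isOddCycleSet (h : IsObstruction G S l)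
    (hS : (G.induce S).Connected) (hcut : NoCutVertex G S) (hnt : S.Nontrivial) (hv : v ∈ S)
    (hT : GallaiTreeOn G (S \ {v})) : IsCliqueSet G S ∨ IsOddCycleSet G S := by
  have hl : ∀ u ∈ S, l u = l v := fun u hu ↦ h.eq_of_noCutVertex hS hcut hnt hu hv
  have hreg : ∀ u ∈ S, degreeIn G S u = (l v).card := fun u hu ↦ by
    rw [← hl u hu, h.card_eq_degreeIn hS hu]
  by_cases hcutT : NoCutVertex G (S \ {v})
  · exact .inl (isCliqueSet_of_regular_of_noCutVertex_sdiff_singleton hS hv hreg hT hcutT)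
  have htwo : (l v).card = 2 :=
    eq_two_of_regular_of_not_noCutVertex_sdiff_singleton hcut hv hreg hT hcutT
  have hconst : IsObstruction G S fun _ ↦ l v :=
    ⟨fun u hu ↦ (hreg u hu).le, fun c hc ↦ h.not_isListColoringOn c
      ⟨fun u hu ↦ (hl u hu).symm ▸ hc.1 u hu, hc.2⟩⟩
  rw [htwo] at hreg
  have hodd : Odd S.ncard := hconst.odd_ncard htwo hreg hv hT.1
  have hone : 1 < S.ncard := Set.one_lt_ncard_iff_nontrivial.2 hnt
  have hthree : 3 ≤ S.ncard := by
    obtain ⟨m, hm⟩ := hodd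
    omega
  exact .inr ⟨hodd, hthree, hS, hreg⟩

theorem IsObstruction.gallaiTreeOn (h : IsObstruction G S l) (hS : (G.induce S).Connected) :
    GallaiTreeOn G S := by
  induction hn : S.ncard using Nat.strong_induction_on generalizing S l with
  | _ n ih =>
    have hdelete : S.Nontrivial → ∀ v ∈ S, (G.induce (S \ {v})).Connected →
        GallaiTreeOn G (S \ {v}) := by
      intro hnt v hv hT
      obtain ⟨l', hl'⟩ := h.exists_sdiff_singleton hS hnt hv
      exact ih _ (hn ▸ Set.ncard_sdiff_singleton_lt_of_mem hv) hl' hT rfl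
    refine ⟨hS, fun B hB ↦ ?_⟩
    obtain ⟨hBS, hBconn, hcut⟩ := hB.1
    obtain ⟨b, hb⟩ : B.Nonempty := Set.nonempty_coe_sort.1 hBconn.nonempty
    rcases hBS.eq_or_ssubset with rfl | hss
    · rcases B.subsingleton_or_nontrivial with hsub | hnt
      · exact .inl fun u hu v hv huv ↦ absurd (hsub hu hv) huv
      · exact h.isCliqueSet_or_isOddCycleSet hS hcut hnt hb
          (hdelete hnt b hb (hcut.connected_sdiff_singleton hnt hb))
    · obtain ⟨v, ⟨hv, hvB⟩, hT⟩ := exists_notMem_connected_induce_sdiff_singleton hS hBconn hss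
      have hnt : S.Nontrivial := ⟨v, hv, b, hBS hb, fun hvb ↦ hvB (hvb ▸ hb)⟩
      exact (hdelete hnt v hv hT).2 B (hB.sdiff_singleton hvB)

end ListColoring

theorem degree_choosable_unless_gallai_general {α : Type*} [Fintype V] (G : SimpleGraph V)
    [DecidableRel G.Adj] (hconn : G.Connected)
    (ℓ : V → Finset α) (hdeg : ∀ v, G.degree v ≤ (ℓ v).card) :
    (∃ c : V → α, (∀ v, c v ∈ ℓ v) ∧ ∀ u v : V, G.Adj u v → c u ≠ c v) ∨
      (GallaiTree G ∧ ∀ v, (ℓ v).card = G.degree v) := by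
  refine or_iff_not_imp_left.2 fun hcol ↦ ?_
  have hobs : IsObstruction G Set.univ ℓ :=
    ⟨fun v _ ↦ degreeIn_univ.trans_le (hdeg v), fun c hc ↦
      hcol ⟨c, fun v ↦ hc.1 v trivial, fun u v ↦ hc.2 u trivial v trivial⟩⟩
  have huniv : (G.induce Set.univ).Connected :=
    (SimpleGraph.induceUnivIso G).connected_iff.2 hconn
  exact ⟨gallaiTree_of_gallaiTreeOn_univ (hobs.gallaiTreeOn huniv), fun v ↦
    (hobs.card_eq_degreeIn huniv (Set.mem_univ v)).trans degreeIn_univ⟩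

/-- Degree-choosability theorem of Borodin and of Erdős, Rubin and Taylor: a connected
graph with lists `ℓ v` of size at least `deg v` is colourable from the lists unless it
is a Gallai tree with `|ℓ v| = deg v` for every `v`. -/
theorem degree_choosable_unless_gallai [Fintype V] (G : SimpleGraph V)
    [DecidableRel G.Adj] (hconn : G.Connected)
    (ℓ : V → Finset ℕ) (hdeg : ∀ v, G.degree v ≤ (ℓ v).card) :
    (∃ c : V → ℕ, (∀ v, c v ∈ ℓ v) ∧ ∀ u v : V, G.Adj u v → c u ≠ c v) ∨
      (GallaiTree G ∧ ∀ v, (ℓ v).card = G.degree v) := by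
  exact degree_choosable_unless_gallai_general G hconn ℓ hdeg
end
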